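/- Limiting absorption for the commutator: Let d ≥ 3 and let 𝔢 be a dispersion relation of class C³ satisfying condition (M). There exists a constant c(𝔢) > 0, depending only on 𝔢, such that for every potential V : Γ → ℝ with Φ_{2,3}(V) < c(𝔢) there is a constant c′ < ∞ with |⟨δ_x, (z − B)^{−1} δ_y⟩| ≤ c′·(1+|x|)²·(1+|y|)² for all z ∈ ℂ∖ℝ and all x, y ∈ Γ, where B = h(|∇𝔢|²) + C_V. -/

import Mathlib

open MeasureTheory Complex Real
open scoped ENNReal

noncomputable section

namespace LatSch

/-- The lattice `Γ = ℤ^d`. -/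
abbrev Γd (d : ℕ) := Fin d → ℤ

/-- The Hilbert space `ℓ²(Γ)`. -/
abbrev L2 (d : ℕ) := lp (fun _ : Γd d => ℂ) 2

/-- Euclidean norm of a lattice point. -/
def lnorm {d : ℕ} (x : Γd d) : ℝ := Real.sqrt (∑ i, ((x i : ℝ)) ^ 2)

/-- The standard basis vector `δ_x` of `ℓ²(Γ)`. -/
def delta {d : ℕ} (x : Γd d) : L2 d := lp.single 2 x 1

local notation "⟪" a ", " b "⟫" => @inner ℂ _ _ a b

/-- The cube `[-π, π]^d`, a fundamental domain of the torus. -/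
def torusBox (d : ℕ) : Set (Fin d → ℝ) := Set.univ.pi fun _ => Set.Icc (-π) π

/-- `⟨p, m⟩` for `p ∈ ℝ^d`, `m ∈ ℤ^d`. -/
def dotZ {d : ℕ} (p : Fin d → ℝ) (m : Γd d) : ℝ := ∑ i, p i * (m i : ℝ)

/-- Fourier coefficient `f̂(m) = (2π)^{-d} ∫_{[-π,π]^d} f(p) e^{i⟨p,m⟩} dp`. -/
def fCoeff {d : ℕ} (f : (Fin d → ℝ) → ℝ) (m : Γd d) : ℂ :=
  ((1 / (2 * π) ^ d : ℝ) : ℂ) *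
    ∫ p in torusBox d, (f p : ℂ) * Complex.exp (Complex.I * (dotZ p m : ℝ))

/-- `H` is the Fourier multiplier (hopping matrix) `h(f)`, characterized by its
matrix elements `⟨δ_x, H δ_y⟩ = f̂(x - y)`. -/
def IsMultiplier {d : ℕ} (f : (Fin d → ℝ) → ℝ) (H : L2 d →L[ℂ] L2 d) : Prop :=
  ∀ x y : Γd d, ⟪delta x, H (delta y)⟫ = fCoeff f (x - y)

/-- `M` is the operator of multiplication by the potential `V`. -/
def IsMulOp {d : ℕ} (V : Γd d → ℝ) (M : L2 d →L[ℂ] L2 d) : Prop :=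
  ∀ (ψ : L2 d) (x : Γd d), (M ψ : ∀ _ : Γd d, ℂ) x = (V x : ℂ) * (ψ : ∀ _ : Γd d, ℂ) x

/-- Partial derivative `∂_{p_k} f (p)`. -/
def pd {d : ℕ} (f : (Fin d → ℝ) → ℝ) (k : Fin d) (p : Fin d → ℝ) : ℝ :=
  fderiv ℝ f p (Pi.single k 1)

/-- `|∇f|²(p) = Σ_k (∂_{p_k} f(p))²`. -/
def gradSq {d : ℕ} (f : (Fin d → ℝ) → ℝ) (p : Fin d → ℝ) : ℝ := ∑ k, pd f k p ^ 2

/-- The Hessian matrix of `f` at `p`. -/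
def hess {d : ℕ} (f : (Fin d → ℝ) → ℝ) (p : Fin d → ℝ) : Matrix (Fin d) (Fin d) ℝ :=
  Matrix.of fun i j => fderiv ℝ (fun q => fderiv ℝ f q (Pi.single j 1)) p (Pi.single i 1)

/-- All critical points of `f` are nondegenerate (`f` is a Morse function). -/
def IsMorse {d : ℕ} (f : (Fin d → ℝ) → ℝ) : Prop :=
  ∀ p, fderiv ℝ f p = 0 → (hess f p).det ≠ 0

/-- `2πℤ^d`-periodicity. -/
def Periodic2pi {d : ℕ} (f : (Fin d → ℝ) → ℝ) : Prop :=
  ∀ (p : Fin d → ℝ) (m : Γd d), f (p + fun i => 2 * π * (m i : ℝ)) = f p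

/-- A dispersion relation: a `2πℤ^d`-periodic function with minimum `0`. -/
def IsDispersion {d : ℕ} (f : (Fin d → ℝ) → ℝ) : Prop :=
  Periodic2pi f ∧ (∀ p, 0 ≤ f p) ∧ (∃ p, f p = 0)

/-- Condition (M): `𝔢` and `|∇𝔢|²` are Morse functions. -/
def CondM {d : ℕ} (f : (Fin d → ℝ) → ℝ) : Prop := IsMorse f ∧ IsMorse (gradSq f)

/-- `Φ_{m,n}(V) = (Σ_x |V(x)|^{1/m} (1+|x|)^n)^m`, valued in `[0,∞]`. -/
def Phi {d : ℕ} (m n : ℕ) (V : Γd d → ℝ) : ℝ≥0∞ :=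
  (∑' x : Γd d, ENNReal.ofReal (|V x| ^ ((1 : ℝ) / m) * (1 + lnorm x) ^ n)) ^ m

/-- The set of eigenvectors of `H` (with real eigenvalue). -/
def eigvecs {d : ℕ} (H : L2 d →L[ℂ] L2 d) : Set (L2 d) :=
  {ψ : L2 d | ψ ≠ 0 ∧ ∃ μ : ℝ, H ψ = (μ : ℂ) • ψ}

/-- `N_pp[H]`: the Hilbert-space dimension of the closed linear span of all
eigenvectors of `H`. -/
def Npp {d : ℕ} (H : L2 d →L[ℂ] L2 d) : Cardinal :=
  Module.rank ℂ ((Submodule.span ℂ (eigvecs H)).topologicalClosure)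

/-- The Fourier transform `ĝ_x(p) = (i/2·|∇𝔢(p)|² + ⟨∇𝔢(p), x⟩) e^{-i⟨p,x⟩}`. -/
def ghat {d : ℕ} (e : (Fin d → ℝ) → ℝ) (x : Γd d) (p : Fin d → ℝ) : ℂ :=
  ((Complex.I / 2) * ((gradSq e p : ℝ) : ℂ) + ((∑ k, pd e k p * (x k : ℝ) : ℝ) : ℂ)) *
    Complex.exp (-(Complex.I * (dotZ p x : ℝ)))

/-- `g : Γ → ℓ²(Γ)` is the family of vectors `g_x` with Fourier transform `ĝ_x`. -/
def IsGVec {d : ℕ} (e : (Fin d → ℝ) → ℝ) (g : Γd d → L2 d) : Prop :=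
  ∀ x m : Γd d,
    (g x : ∀ _ : Γd d, ℂ) m =
      ((1 / (2 * π) ^ d : ℝ) : ℂ) *
        ∫ p in torusBox d, ghat e x p * Complex.exp (Complex.I * (dotZ p m : ℝ))

/-- `C` is the bounded self-adjoint realization
`C_V = Σ_x i V(x) (|δ_x⟩⟨g_x| - |g_x⟩⟨δ_x|)` of the commutator `i[V, A(𝔢)]`. -/
def IsCommOp {d : ℕ} (V : Γd d → ℝ) (g : Γd d → L2 d) (C : L2 d →L[ℂ] L2 d) : Prop :=
  ∀ ψ : L2 d,
    HasSum (fun x : Γd d =>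
      (Complex.I * (V x : ℂ)) • (⟪g x, ψ⟫ • delta x - ⟪delta x, ψ⟫ • g x)) (C ψ)

/-- `R` is the resolvent `(z - H)^{-1}`. -/
def IsResolventAt {d : ℕ} (H : L2 d →L[ℂ] L2 d) (z : ℂ) (R : L2 d →L[ℂ] L2 d) : Prop :=
  R.comp (z • (1 : L2 d →L[ℂ] L2 d) - H) = 1 ∧ (z • (1 : L2 d →L[ℂ] L2 d) - H).comp R = 1

/-- `‖f‖_{C^m} ≤ C`: all partial derivatives of order `≤ m` are bounded by `C`. -/
def CmNormLe {d : ℕ} (m : ℕ) (f : (Fin d → ℝ) → ℝ) (C : ℝ) : Prop :=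
  ∀ j : ℕ, j ≤ m → ∀ (p : Fin d → ℝ) (k : Fin j → Fin d),
    |iteratedFDeriv ℝ j f p (fun i => Pi.single (k i) 1)| ≤ C

/-- `K(𝔢) ≥ K`: at every critical point, every eigenvalue `λ` of the Hessian
satisfies `|λ|^{1/2} ≥ K`. -/
def MinCurvGe {d : ℕ} (f : (Fin d → ℝ) → ℝ) (K : ℝ) : Prop :=
  ∀ p, fderiv ℝ f p = 0 → ∀ (lam : ℝ) (v : Fin d → ℝ), v ≠ 0 →
    (hess f p).mulVec v = lam • v → K ^ 2 ≤ |lam|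

/-- The set of thresholds `Thr(𝔢) = 𝔢(Crit(𝔢))`. -/
def Thr {d : ℕ} (f : (Fin d → ℝ) → ℝ) : Set ℝ := f '' {p | fderiv ℝ f p = 0}


/-- The number of strictly negative eigenvalues of `C`, counted with multiplicity:
the dimension of the span of eigenvectors with strictly negative eigenvalue. -/
def NegCount {d : ℕ} (C : L2 d →L[ℂ] L2 d) : Cardinal :=
  Module.rank ℂ (Submodule.span ℂ
    {ψ : L2 d | ψ ≠ 0 ∧ ∃ μ : ℝ, μ < 0 ∧ C ψ = (μ : ℂ) • ψ})

/-- The number of strictly positive eigenvalues of `C`, counted with multiplicity. -/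
def PosCount {d : ℕ} (C : L2 d →L[ℂ] L2 d) : Cardinal :=
  Module.rank ℂ (Submodule.span ℂ
    {ψ : L2 d | ψ ≠ 0 ∧ ∃ μ : ℝ, 0 < μ ∧ C ψ = (μ : ℂ) • ψ})



/-!
Resolvents are tested on vectors whose Fourier transform is `C¹`, with a bound `M` on the function
and its first partial derivatives; `δ_x` and `g_x` are of this type with `M` of order `1 + |x|` and
`(1 + |x|)²`. Write `f = |∇𝔢|²`. The matrix elements of `(z - h(f))⁻¹` are integrals
`∫ u / (z - f)`. Since `1 / (z - f)` is the derivative of `-log (z - ·)` evaluated at `f`,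
integrating by parts along `∇f / |∇f|²` trades the singularity for `∫ |log (z - f)| |∇f|⁻²`. Near
the nondegenerate critical points of `f` the weight `|∇f|^{-2s}` is integrable for `2s < d`, hence
for some `s > 1` when `d ≥ 3`, and Young's inequality absorbs the logarithm into a small power of
`|z - f|⁻¹`, whose integral is bounded uniformly in `z` by the same integration by parts. So
`|⟨v, (z - h(f))⁻¹ w⟩| ≤ K M_v M_w`. By the resolvent identity, a bound
`|⟨v, (z - B)⁻¹ w⟩| ≤ S M_v M_w`, which holds a priori with a `z`-dependent `S`, improves to
`K + q S` with `q` proportional to `Σ |V(x)| (1 + |x|)³`; if `q < 1`, iterating gives the bound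
`K / (1 - q)`, uniform in `z`.
-/

section Development

variable {d : ℕ}

/-! ### Fourier series on the box -/

lemma isCompact_torusBox : IsCompact (torusBox d) :=
  isCompact_univ_pi fun _ => isCompact_Icc

lemma integrableOn_torusBox {E : Type*} [NormedAddCommGroup E] {b : (Fin d → ℝ) → E}
    (hb : Continuous b) : IntegrableOn b (torusBox d) :=
  hb.continuousOn.integrableOn_compact isCompact_torusBox

/-- The mean value of `b` over the torus, `(2π)^{-d} ∫_{[-π,π]^d} b(p) dp`. -/
def torusMean (b : (Fin d → ℝ) → ℂ) : ℂ :=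
  ((1 / (2 * π) ^ d : ℝ) : ℂ) * ∫ p in torusBox d, b p

lemma torusMean_const_mul (c : ℂ) (b : (Fin d → ℝ) → ℂ) :
    torusMean (fun p => c * b p) = c * torusMean b := by
  rw [torusMean, torusMean, integral_const_mul, mul_left_comm]

lemma torusMean_sub {a b : (Fin d → ℝ) → ℂ} (ha : Continuous a) (hb : Continuous b) :
    torusMean (fun p => a p - b p) = torusMean a - torusMean b := by
  rw [torusMean, torusMean, torusMean,
    integral_sub (integrableOn_torusBox ha) (integrableOn_torusBox hb), mul_sub]

lemma norm_torusMean_le_norm_integral (b : (Fin d → ℝ) → ℂ) :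
    ‖torusMean b‖ ≤ ‖∫ p in torusBox d, b p‖ := by
  have hone : (1 : ℝ) ≤ (2 * π) ^ d := one_le_pow₀ (by linarith [Real.pi_gt_three])
  rw [torusMean, norm_mul, Complex.norm_real, Real.norm_of_nonneg (by positivity)]
  exact mul_le_of_le_one_left (norm_nonneg _) (div_le_one_of_le₀ hone (by positivity))

/-- `ψ ∈ ℓ²(ℤ^d)` has Fourier transform `a`, a function on the box `[-π,π]^d`. -/
def HasSymbol (ψ : L2 d) (a : (Fin d → ℝ) → ℂ) : Prop :=
  ∀ m : Γd d, (ψ : ∀ _ : Γd d, ℂ) m =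
    torusMean fun p => a p * Complex.exp (Complex.I * (dotZ p m : ℝ))

lemma continuous_dotZ (m : Γd d) : Continuous fun p => dotZ p m := by
  unfold dotZ
  fun_prop

lemma dotZ_neg (p : Fin d → ℝ) (m : Γd d) : dotZ p (-m) = -dotZ p m := by
  simp [dotZ]

lemma dotZ_sub (p : Fin d → ℝ) (m n : Γd d) : dotZ p (m - n) = dotZ p m - dotZ p n := by
  simp [dotZ, mul_sub]

/-- The character `p ↦ e^{-i⟨p,y⟩}`, the Fourier transform of `δ_y`. -/
def character (y : Γd d) (p : Fin d → ℝ) : ℂ := Complex.exp (-(Complex.I * (dotZ p y : ℝ)))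

lemma continuous_character (y : Γd d) : Continuous (character y) := by
  have := continuous_dotZ y
  unfold character
  fun_prop

lemma conj_character (y : Γd d) (p : Fin d → ℝ) :
    (starRingEnd ℂ) (character y p) = Complex.exp (Complex.I * (dotZ p y : ℝ)) := by
  rw [character, ← Complex.exp_conj]
  simp

lemma HasSymbol.const_smul {ψ : L2 d} {a : (Fin d → ℝ) → ℂ} (hψ : HasSymbol ψ a) (c : ℂ) :
    HasSymbol (c • ψ) fun p => c * a p := fun m => by
  simp only [mul_assoc, torusMean_const_mul]
  rw [lp.coeFn_smul, Pi.smul_apply, hψ m, smul_eq_mul]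

lemma HasSymbol.sub {ψ φ : L2 d} {a b : (Fin d → ℝ) → ℂ} (hψ : HasSymbol ψ a)
    (hφ : HasSymbol φ b) (ha : Continuous a) (hb : Continuous b) :
    HasSymbol (ψ - φ) fun p => a p - b p := fun m => by
  have := continuous_dotZ m
  simp only [sub_mul]
  rw [torusMean_sub (by fun_prop) (by fun_prop), lp.coeFn_sub, Pi.sub_apply, hψ m, hφ m]

lemma HasSymbol.unique {ψ φ : L2 d} {a : (Fin d → ℝ) → ℂ} (hψ : HasSymbol ψ a)
    (hφ : HasSymbol φ a) : ψ = φ := by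
  ext m
  rw [hψ m, hφ m]

section Torus

-- Mathlib's Fourier series on `UnitAddTorus` use the Haar probability measure of the circle.
local instance : MeasureSpace UnitAddCircle := ⟨AddCircle.haarAddCircle⟩

local instance : Measure.IsAddHaarMeasure (volume : Measure UnitAddCircle) :=
  inferInstanceAs (Measure.IsAddHaarMeasure AddCircle.haarAddCircle)

local instance : IsProbabilityMeasure (volume : Measure UnitAddCircle) :=
  inferInstanceAs (IsProbabilityMeasure AddCircle.haarAddCircle)

/-- The representative in `[-π,π]^d` of a point `t` of the unit torus under `p = -2πt`; the sign
turns Mathlib's characters `e^{2πi⟨m,t⟩}` into `e^{-i⟨p,m⟩}`. -/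
def boxPoint (t : UnitAddTorus (Fin d)) : Fin d → ℝ :=
  (-(2 * π)) • fun i => ((AddCircle.equivIoc 1 (-1 / 2 : ℝ) (t i)).1 : ℝ)

lemma measurable_boxPoint : Measurable (boxPoint (d := d)) := by
  refine measurable_pi_lambda _ fun i => Measurable.const_mul ?_ _
  exact measurable_subtype_coe.comp
    ((AddCircle.measurableEquivIoc 1 (-1 / 2 : ℝ)).measurable.comp (measurable_pi_apply i))

lemma boxPoint_mem (t : UnitAddTorus (Fin d)) : boxPoint t ∈ torusBox d := by
  intro i _
  obtain ⟨hlo, hhi⟩ := (AddCircle.equivIoc 1 (-1 / 2 : ℝ) (t i)).2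
  have hπ := Real.pi_pos
  simp only [boxPoint, Pi.smul_apply, smul_eq_mul, Set.mem_Icc]
  constructor <;> nlinarith

lemma boxPoint_coe {x : Fin d → ℝ} (hx : ∀ i, x i ∈ Set.Ioc (-1 / 2 : ℝ) (-1 / 2 + 1)) :
    boxPoint (fun i => (x i : UnitAddCircle)) = (-(2 * π)) • x := by
  unfold boxPoint
  congr 1
  funext i
  exact AddCircle.equivIoc_coe_of_mem (p := (1 : ℝ)) (hx i)

open scoped Pointwise in
lemma smul_pi_Ioc_eq_pi_Ico :
    (-(2 * π)) • {x : Fin d → ℝ | ∀ i, x i ∈ Set.Ioc (-1 / 2 : ℝ) (-1 / 2 + 1)} =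
      Set.univ.pi fun _ => Set.Ico (-π) π := by
  have hπ := Real.pi_pos
  ext x
  rw [Set.mem_smul_set_iff_inv_smul_mem₀ (by simp [Real.pi_ne_zero])]
  simp only [Set.mem_pi, Set.mem_univ, true_implies, Set.mem_ofPred_eq, Pi.smul_apply, smul_eq_mul]
  refine forall_congr' fun i => ?_
  have hcancel : (-(2 * π)) * ((-(2 * π))⁻¹ * x i) = x i :=
    mul_inv_cancel_left₀ (by simp [Real.pi_ne_zero]) _
  constructor <;> rintro ⟨hlo, hhi⟩ <;> constructor <;> nlinarith

lemma integral_boxPoint (b : (Fin d → ℝ) → ℂ) :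
    ∫ t : UnitAddTorus (Fin d), b (boxPoint t) = torusMean b := by
  have hcell : MeasurableSet {x : Fin d → ℝ | ∀ i, x i ∈ Set.Ioc (-1 / 2 : ℝ) (-1 / 2 + 1)} := by
    simpa only [Set.pi, Set.mem_univ, true_implies] using
      MeasurableSet.univ_pi fun _ : Fin d => measurableSet_Ioc
  have hbox : (Set.univ.pi fun _ : Fin d => Set.Ico (-π) π) =ᵐ[volume] torusBox d := by
    rw [torusBox, Set.pi_univ_Icc]
    exact Measure.univ_pi_Ico_ae_eq_Icc
  rw [UnitAddTorus.integral_preimage _ (fun _ => (-1 / 2 : ℝ)),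
    setIntegral_congr_fun hcell (g := fun x => b ((-(2 * π)) • x))
      fun x hx => congrArg b (boxPoint_coe hx),
    Measure.setIntegral_comp_smul (volume : Measure (Fin d → ℝ)) b _ (by simp [Real.pi_ne_zero]),
    smul_pi_Ioc_eq_pi_Ico, setIntegral_congr_set hbox, Module.finrank_fin_fun, abs_inv, abs_pow,
    abs_neg, abs_of_pos (by positivity), ← one_div, Complex.real_smul, torusMean]

lemma norm_torusMean_le {b : (Fin d → ℝ) → ℂ} {C : ℝ} (hb : ∀ p ∈ torusBox d, ‖b p‖ ≤ C) :
    ‖torusMean b‖ ≤ C := by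
  rw [← integral_boxPoint]
  refine (norm_integral_le_of_norm_le_const
    (Filter.Eventually.of_forall fun t => hb _ (boxPoint_mem t))).trans ?_
  simp

lemma mFourier_eq_character_boxPoint (m : Γd d) (t : UnitAddTorus (Fin d)) :
    UnitAddTorus.mFourier m t = character m (boxPoint t) := by
  simp only [UnitAddTorus.mFourier, ContinuousMap.coe_mk, character, dotZ]
  push_cast
  rw [Finset.mul_sum, ← Finset.sum_neg_distrib, Complex.exp_sum]
  refine Finset.prod_congr rfl fun i _ => ?_
  have ht : t i = (((AddCircle.equivIoc 1 (-1 / 2 : ℝ) (t i)).1 : ℝ) : UnitAddCircle) :=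
    ((AddCircle.equivIoc 1 (-1 / 2 : ℝ)).symm_apply_apply (t i)).symm
  conv_lhs => rw [ht]
  rw [fourier_coe_apply]
  congr 1
  simp only [boxPoint, Pi.smul_apply, smul_eq_mul]
  push_cast
  ring

lemma memLp_comp_boxPoint {a : (Fin d → ℝ) → ℂ} (ha : Continuous a) :
    MemLp (fun t : UnitAddTorus (Fin d) => a (boxPoint t)) 2 := by
  obtain ⟨C, hC⟩ :=
    isCompact_torusBox.exists_bound_of_continuousOn (s := torusBox d) ha.continuousOn
  exact MemLp.of_bound (ha.measurable.comp measurable_boxPoint).aestronglyMeasurable C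
    (Filter.Eventually.of_forall fun t => hC _ (boxPoint_mem t))

lemma hasSymbol_repr {a : (Fin d → ℝ) → ℂ} (ha : Continuous a) :
    HasSymbol ((UnitAddTorus.mFourierBasis (d := Fin d)).repr
      ((memLp_comp_boxPoint ha).toLp _)) a := fun m => by
  rw [UnitAddTorus.mFourierBasis_repr, UnitAddTorus.mFourierCoeff, ← integral_boxPoint]
  refine integral_congr_ae ?_
  filter_upwards [(memLp_comp_boxPoint ha).coeFn_toLp] with t ht
  rw [ht, mFourier_eq_character_boxPoint, character, dotZ_neg, smul_eq_mul, mul_comm]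
  push_cast
  rw [mul_neg, neg_neg]

lemma exists_hasSymbol {a : (Fin d → ℝ) → ℂ} (ha : Continuous a) : ∃ ψ : L2 d, HasSymbol ψ a :=
  ⟨_, hasSymbol_repr ha⟩

lemma HasSymbol.inner_eq {ψ φ : L2 d} {a b : (Fin d → ℝ) → ℂ} (hψ : HasSymbol ψ a)
    (hφ : HasSymbol φ b) (ha : Continuous a) (hb : Continuous b) :
    ⟪ψ, φ⟫ = torusMean fun p => (starRingEnd ℂ) (a p) * b p := by
  rw [hψ.unique (hasSymbol_repr ha), hφ.unique (hasSymbol_repr hb),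
    LinearIsometryEquiv.inner_map_map, L2.inner_def, ← integral_boxPoint]
  refine integral_congr_ae ?_
  filter_upwards [(memLp_comp_boxPoint ha).coeFn_toLp,
    (memLp_comp_boxPoint hb).coeFn_toLp] with t hat hbt
  rw [hat, hbt, RCLike.inner_apply, mul_comm]

lemma hasSymbol_delta (y : Γd d) : HasSymbol (delta y) (character y) := by
  have hbasis : (memLp_comp_boxPoint (continuous_character y)).toLp _ =
      UnitAddTorus.mFourierBasis (d := Fin d) y := by
    rw [UnitAddTorus.coe_mFourierBasis]
    apply Lp.ext
    filter_upwards [(memLp_comp_boxPoint (continuous_character y)).coeFn_toLp,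
      UnitAddTorus.coeFn_mFourierLp 2 y] with t hchar hfourier
    rw [hchar, hfourier, mFourier_eq_character_boxPoint]
  have hrepr := hasSymbol_repr (continuous_character y)
  rwa [hbasis, HilbertBasis.repr_self] at hrepr

end Torus

/-! ### Fourier multipliers -/

lemma inner_delta (x : Γd d) (ψ : L2 d) : ⟪delta x, ψ⟫ = (ψ : ∀ _ : Γd d, ℂ) x := by
  rw [delta, lp.inner_single_left]
  simp

lemma clm_ext_delta {A B : L2 d →L[ℂ] ℂ} (h : ∀ y, A (delta y) = B (delta y)) : A = B := by
  ext ψ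
  have hψ := lp.hasSum_single (p := 2) (by norm_num) ψ
  have hcoord (y : Γd d) :
      lp.single 2 y ((ψ : ∀ _ : Γd d, ℂ) y) = ((ψ : ∀ _ : Γd d, ℂ) y) • delta y := by
    rw [delta, ← lp.single_smul, smul_eq_mul, mul_one]
  refine (A.hasSum hψ).unique ?_
  simpa only [hcoord, map_smul, h] using B.hasSum hψ

lemma IsMultiplier.hasSymbol_apply {f : (Fin d → ℝ) → ℝ} {G : L2 d →L[ℂ] L2 d}
    (hG : IsMultiplier f G) (hf : Continuous f) {ψ : L2 d} {a : (Fin d → ℝ) → ℂ}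
    (hψ : HasSymbol ψ a) (ha : Continuous a) : HasSymbol (G ψ) fun p => (f p : ℂ) * a p := by
  intro m
  have hrow : Continuous fun p => (f p : ℂ) * character m p := by
    have := continuous_character m
    fun_prop
  have hconj (p : Fin d → ℝ) : (starRingEnd ℂ) ((f p : ℂ) * character m p) =
      (f p : ℂ) * Complex.exp (Complex.I * (dotZ p m : ℝ)) := by
    rw [map_mul, Complex.conj_ofReal, conj_character]
  obtain ⟨φ, hφ⟩ := exists_hasSymbol hrow
  have hmatrix : (innerSL ℂ (delta m)).comp G = innerSL ℂ φ := by
    refine clm_ext_delta fun y => ?_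
    simp only [ContinuousLinearMap.comp_apply, innerSL_apply_apply]
    rw [hG, hφ.inner_eq (hasSymbol_delta y) hrow (continuous_character y), fCoeff, torusMean]
    congr 2
    ext p
    rw [hconj, character, mul_assoc, ← Complex.exp_add, dotZ_sub]
    congr 2
    push_cast
    ring
  have hinner := DFunLike.congr_fun hmatrix ψ
  simp only [ContinuousLinearMap.comp_apply, innerSL_apply_apply] at hinner
  rw [← inner_delta, hinner, hφ.inner_eq hψ hrow ha]
  congr 1
  ext p
  rw [hconj, mul_right_comm]

lemma sub_ofReal_ne_zero {z : ℂ} (hz : z.im ≠ 0) (t : ℝ) : z - (t : ℂ) ≠ 0 := fun h =>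
  hz (by simpa using congrArg Complex.im h)

lemma IsMultiplier.exists_hasSymbol_div {f : (Fin d → ℝ) → ℝ} {G : L2 d →L[ℂ] L2 d}
    (hG : IsMultiplier f G) (hf : Continuous f) {φ : L2 d} {b : (Fin d → ℝ) → ℂ}
    (hφ : HasSymbol φ b) (hb : Continuous b) {z : ℂ} (hz : z.im ≠ 0) :
    ∃ r : L2 d, HasSymbol r (fun p => b p / (z - (f p : ℂ))) ∧ z • r - G r = φ := by
  have hquot : Continuous fun p => b p / (z - (f p : ℂ)) :=
    hb.div (by fun_prop) fun p => sub_ofReal_ne_zero hz _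
  obtain ⟨r, hr⟩ := exists_hasSymbol hquot
  have hdiff := (hr.const_smul z).sub (hG.hasSymbol_apply hf hr hquot) (by fun_prop) (by fun_prop)
  refine ⟨r, hr, HasSymbol.unique hdiff ?_⟩
  convert hφ using 2 with p
  rw [← sub_mul, mul_div_cancel₀ _ (sub_ofReal_ne_zero hz _)]

/-! ### Calculus on the torus -/

/-- `2πℤ^d`-periodicity for functions with values in any type. -/
def IsTorusPeriodic {E : Type*} (F : (Fin d → ℝ) → E) : Prop :=
  ∀ (p : Fin d → ℝ) (m : Γd d), F (p + fun i => 2 * π * (m i : ℝ)) = F p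

lemma IsTorusPeriodic.exists_mem_torusBox {E : Type*} {F : (Fin d → ℝ) → E}
    (hF : IsTorusPeriodic F) (p : Fin d → ℝ) : ∃ q ∈ torusBox d, F q = F p := by
  have hπ : (0 : ℝ) < 2 * π := by positivity
  refine ⟨_, fun i _ => ?_, hF p fun i => -toIcoDiv hπ (-π) (p i)⟩
  have hmod : p i + 2 * π * ((-toIcoDiv hπ (-π) (p i) : ℤ) : ℝ) = toIcoMod hπ (-π) (p i) := by
    rw [toIcoMod, zsmul_eq_mul]
    push_cast
    ring
  obtain ⟨hlo, hhi⟩ := toIcoMod_mem_Ico hπ (-π) (p i)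
  rw [Pi.add_apply, hmod]
  exact ⟨hlo, by linarith⟩

lemma IsTorusPeriodic.exists_norm_le {E : Type*} [NormedAddCommGroup E] {F : (Fin d → ℝ) → E}
    (hF : IsTorusPeriodic F) (hc : Continuous F) : ∃ C : ℝ, ∀ p, ‖F p‖ ≤ C := by
  obtain ⟨C, hC⟩ :=
    isCompact_torusBox.exists_bound_of_continuousOn (s := torusBox d) hc.continuousOn
  refine ⟨C, fun p => ?_⟩
  obtain ⟨q, hq, hqp⟩ := hF.exists_mem_torusBox p
  exact hqp ▸ hC q hq

lemma IsTorusPeriodic.fderiv {E : Type*} [NormedAddCommGroup E] [NormedSpace ℝ E]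
    {F : (Fin d → ℝ) → E} (hF : IsTorusPeriodic F) : IsTorusPeriodic (fderiv ℝ F) := by
  intro p m
  rw [← fderiv_comp_add_right, funext fun q => hF q m]

lemma IsTorusPeriodic.pd {f : (Fin d → ℝ) → ℝ} (hf : IsTorusPeriodic f) (k : Fin d) :
    IsTorusPeriodic (pd f k) := fun p m =>
  DFunLike.congr_fun (hf.fderiv p m) _

lemma IsTorusPeriodic.gradSq {f : (Fin d → ℝ) → ℝ} (hf : IsTorusPeriodic f) :
    IsTorusPeriodic (gradSq f) := fun p m =>
  Finset.sum_congr rfl fun k _ => by rw [hf.pd k p m]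

lemma contDiff_pd {m n : WithTop ℕ∞} {f : (Fin d → ℝ) → ℝ} (hf : ContDiff ℝ n f)
    (hmn : m + 1 ≤ n) (k : Fin d) : ContDiff ℝ m (pd f k) :=
  (hf.fderiv_right hmn).clm_apply contDiff_const

lemma contDiff_gradSq {m n : WithTop ℕ∞} {f : (Fin d → ℝ) → ℝ} (hf : ContDiff ℝ n f)
    (hmn : m + 1 ≤ n) : ContDiff ℝ m (gradSq f) :=
  ContDiff.sum fun k _ => (contDiff_pd hf hmn k).pow 2

lemma gradSq_nonneg (f : (Fin d → ℝ) → ℝ) (p : Fin d → ℝ) : 0 ≤ gradSq f p :=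
  Finset.sum_nonneg fun _ _ => sq_nonneg _

lemma pd_sq_le_gradSq (f : (Fin d → ℝ) → ℝ) (k : Fin d) (p : Fin d → ℝ) :
    pd f k p ^ 2 ≤ gradSq f p :=
  Finset.single_le_sum (f := fun i => pd f i p ^ 2) (fun _ _ => sq_nonneg _) (Finset.mem_univ k)

/-- The derivative of `u` at `p` in the direction of the `k`-th basis vector, for `u` with values
in any normed space; for real functions this is `pd`. -/
abbrev partialDeriv {E : Type*} [NormedAddCommGroup E] [NormedSpace ℝ E] (u : (Fin d → ℝ) → E)
    (k : Fin d) (p : Fin d → ℝ) : E :=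
  fderiv ℝ u p (Pi.single k 1)

lemma continuous_partialDeriv {E : Type*} [NormedAddCommGroup E] [NormedSpace ℝ E]
    {u : (Fin d → ℝ) → E} (hu : ContDiff ℝ 1 u) (k : Fin d) : Continuous (partialDeriv u k) :=
  (hu.continuous_fderiv one_ne_zero).clm_apply continuous_const

lemma integral_sum_partialDeriv_eq_zero {E : Type*} [NormedAddCommGroup E] [NormedSpace ℝ E]
    {F : Fin d → (Fin d → ℝ) → E} (hF : ∀ k, ContDiff ℝ 1 (F k))
    (hper : ∀ k, IsTorusPeriodic (F k)) :
    ∫ p in torusBox d, ∑ k, partialDeriv (F k) k p = 0 := by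
  cases d with
  | zero => simp
  | succ n =>
    have hπ := Real.pi_pos
    have hcont : Continuous fun p => ∑ k, partialDeriv (F k) k p :=
      continuous_finsetSum _ fun k _ => continuous_partialDeriv (hF k) k
    have hface (i : Fin (n + 1)) (x : Fin n → ℝ) :
        F i (Fin.insertNth i π x) = F i (Fin.insertNth i (-π) x) := by
      rw [← hper i (Fin.insertNth i (-π) x) (Pi.single i 1)]
      congr 1
      funext j
      rcases Fin.eq_self_or_eq_succAbove i j with rfl | ⟨l, rfl⟩
      · simp
        ring
      · simp
    rw [torusBox, Set.pi_univ_Icc, integral_divergence_of_hasFDerivAt_off_countable' _ _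
      (fun i => by simp only; linarith) F (fun k p => fderiv ℝ (F k) p) ∅ Set.countable_empty
      (fun i => (hF i).continuous.continuousOn)
      (fun x _ i => ((hF i).differentiable one_ne_zero x).hasFDerivAt)
      (hcont.continuousOn.integrableOn_compact isCompact_Icc)]
    exact Finset.sum_eq_zero fun i _ => sub_eq_zero.2 (by simp only [hface])

lemma integral_sum_mul_partialDeriv {X : Fin d → (Fin d → ℝ) → ℂ} {b : (Fin d → ℝ) → ℂ}
    (hX : ∀ k, ContDiff ℝ 1 (X k)) (hXper : ∀ k, IsTorusPeriodic (X k)) (hb : ContDiff ℝ 1 b)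
    (hbper : IsTorusPeriodic b) :
    ∫ p in torusBox d, ∑ k, X k p * partialDeriv b k p =
      -∫ p in torusBox d, (∑ k, partialDeriv (X k) k p) * b p := by
  have hproduct (k : Fin d) (p : Fin d → ℝ) : partialDeriv (fun q => X k q * b q) k p =
      X k p * partialDeriv b k p + partialDeriv (X k) k p * b p := by
    rw [partialDeriv, fderiv_fun_mul ((hX k).differentiable one_ne_zero p)
      (hb.differentiable one_ne_zero p)]
    simp only [add_apply, smul_apply, smul_eq_mul]
    ring
  have hdiv := integral_sum_partialDeriv_eq_zero (F := fun k q => X k q * b q)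
    (fun k => (hX k).mul hb) fun k p m => congrArg₂ (· * ·) (hXper k p m) (hbper p m)
  simp only [hproduct, Finset.sum_add_distrib, ← Finset.sum_mul] at hdiv
  have hleft : Continuous fun p => ∑ k, X k p * partialDeriv b k p :=
    continuous_finsetSum _ fun k _ => (hX k).continuous.mul (continuous_partialDeriv hb k)
  have hright : Continuous fun p => (∑ k, partialDeriv (X k) k p) * b p :=
    (continuous_finsetSum _ fun k _ => continuous_partialDeriv (hX k) k).mul hb.continuous
  rw [integral_add (integrableOn_torusBox hleft) (integrableOn_torusBox hright)] at hdiv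
  exact eq_neg_of_add_eq_zero_left hdiv

/-- `u` is `C¹` and `2πℤ^d`-periodic, and `u` and all its first partial derivatives are bounded
by `M`. -/
structure HasC1Bound {E : Type*} [NormedAddCommGroup E] [NormedSpace ℝ E] (u : (Fin d → ℝ) → E)
    (M : ℝ) : Prop where
  contDiff : ContDiff ℝ 1 u
  periodic : IsTorusPeriodic u
  norm_le : ∀ p, ‖u p‖ ≤ M
  norm_partialDeriv_le : ∀ k p, ‖partialDeriv u k p‖ ≤ M

namespace HasC1Bound

variable {E : Type*} [NormedAddCommGroup E] [NormedSpace ℝ E] {u v : (Fin d → ℝ) → E} {M M' : ℝ}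

lemma nonneg (hu : HasC1Bound u M) : 0 ≤ M := (norm_nonneg _).trans (hu.norm_le 0)

lemma mono (hu : HasC1Bound u M) (h : M ≤ M') : HasC1Bound u M' :=
  ⟨hu.contDiff, hu.periodic, fun p => (hu.norm_le p).trans h,
    fun k p => (hu.norm_partialDeriv_le k p).trans h⟩

lemma differentiableAt (hu : HasC1Bound u M) (p : Fin d → ℝ) : DifferentiableAt ℝ u p :=
  hu.contDiff.differentiable one_ne_zero p

lemma const (c : E) : HasC1Bound (fun _ : Fin d → ℝ => c) ‖c‖ where
  contDiff := contDiff_const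
  periodic _ _ := rfl
  norm_le _ := le_rfl
  norm_partialDeriv_le k p := by simp [partialDeriv]

lemma add (hu : HasC1Bound u M) (hv : HasC1Bound v M') :
    HasC1Bound (fun p => u p + v p) (M + M') where
  contDiff := hu.contDiff.add hv.contDiff
  periodic p m := congrArg₂ (· + ·) (hu.periodic p m) (hv.periodic p m)
  norm_le p := norm_add_le_of_le (hu.norm_le p) (hv.norm_le p)
  norm_partialDeriv_le k p := by
    rw [partialDeriv, fderiv_fun_add (hu.differentiableAt p) (hv.differentiableAt p)]
    exact norm_add_le_of_le (hu.norm_partialDeriv_le k p) (hv.norm_partialDeriv_le k p)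

lemma sum {ι : Type*} {w : ι → (Fin d → ℝ) → E} {B : ι → ℝ} (hw : ∀ i, HasC1Bound (w i) (B i))
    (s : Finset ι) : HasC1Bound (fun p => ∑ i ∈ s, w i p) (∑ i ∈ s, B i) := by
  classical
  induction s using Finset.induction_on with
  | empty => simpa using const (d := d) (0 : E)
  | insert i s hi ih => simpa only [Finset.sum_insert hi] using (hw i).add ih

lemma clm_comp {F : Type*} [NormedAddCommGroup F] [NormedSpace ℝ F] (L : E →L[ℝ] F)
    (hu : HasC1Bound u M) : HasC1Bound (fun p => L (u p)) (‖L‖ * M) where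
  contDiff := L.contDiff.comp hu.contDiff
  periodic p m := congrArg L (hu.periodic p m)
  norm_le p := L.le_opNorm_of_le (hu.norm_le p)
  norm_partialDeriv_le k p := by
    have hcomp := L.hasFDerivAt.comp p (hu.differentiableAt p).hasFDerivAt
    rw [partialDeriv, show fderiv ℝ (fun q => L (u q)) p = _ from hcomp.fderiv]
    exact L.le_opNorm_of_le (hu.norm_partialDeriv_le k p)

lemma ofReal {f : (Fin d → ℝ) → ℝ} (hf : HasC1Bound f M) : HasC1Bound (fun p => (f p : ℂ)) M := by
  simpa using hf.clm_comp Complex.ofRealCLM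

lemma conj {a : (Fin d → ℝ) → ℂ} (ha : HasC1Bound a M) :
    HasC1Bound (fun p => (starRingEnd ℂ) (a p)) M := by
  simpa using ha.clm_comp (Complex.conjCLE : ℂ →L[ℝ] ℂ)

lemma mul {A : Type*} [NormedRing A] [NormedAlgebra ℝ A] {a b : (Fin d → ℝ) → A}
    (ha : HasC1Bound a M) (hb : HasC1Bound b M') :
    HasC1Bound (fun p => a p * b p) (2 * M * M') where
  contDiff := ha.contDiff.mul hb.contDiff
  periodic p m := congrArg₂ (· * ·) (ha.periodic p m) (hb.periodic p m)
  norm_le p := by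
    have := norm_mul_le_of_le (ha.norm_le p) (hb.norm_le p)
    nlinarith [mul_nonneg ha.nonneg hb.nonneg]
  norm_partialDeriv_le k p := by
    rw [partialDeriv, fderiv_fun_mul' (ha.differentiableAt p) (hb.differentiableAt p)]
    calc ‖a p * partialDeriv b k p + partialDeriv a k p * b p‖
        ≤ M * M' + M * M' := norm_add_le_of_le
          (norm_mul_le_of_le (ha.norm_le p) (hb.norm_partialDeriv_le k p))
          (norm_mul_le_of_le (ha.norm_partialDeriv_le k p) (hb.norm_le p))
      _ = 2 * M * M' := by ring

lemma exists_of_contDiff (hu : ContDiff ℝ 1 u) (hper : IsTorusPeriodic u) :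
    ∃ B, 0 < B ∧ HasC1Bound u B := by
  obtain ⟨B₀, hB₀⟩ := hper.exists_norm_le hu.continuous
  obtain ⟨B₁, hB₁⟩ := hper.fderiv.exists_norm_le (hu.continuous_fderiv one_ne_zero)
  have hpos : 0 ≤ B₁ := (norm_nonneg _).trans (hB₁ 0)
  refine ⟨|B₀| + B₁ + 1, by positivity, hu, hper, fun p => ?_, fun k p => ?_⟩
  · linarith [hB₀ p, le_abs_self B₀]
  · have hunit : ‖(Pi.single k 1 : Fin d → ℝ)‖ ≤ 1 := by
      rw [Pi.norm_single, norm_one]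
    linarith [(fderiv ℝ u p).le_of_opNorm_le_of_le (hB₁ p) hunit, abs_nonneg B₀]

lemma exists_forall_pd {f : (Fin d → ℝ) → ℝ} (hf : ContDiff ℝ 2 f) (hper : IsTorusPeriodic f) :
    ∃ B, 0 < B ∧ ∀ k, HasC1Bound (pd f k) B := by
  choose B hBpos hB using fun k =>
    exists_of_contDiff (contDiff_pd hf (by norm_num) k) (hper.pd k)
  refine ⟨∑ k, B k + 1, ?_, fun k => (hB k).mono ?_⟩
  · have := Finset.sum_nonneg fun k (_ : k ∈ Finset.univ) => (hBpos k).le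
    positivity
  · linarith [Finset.single_le_sum (fun k _ => (hBpos k).le) (Finset.mem_univ k)]

end HasC1Bound

/-! ### Integrability near nondegenerate critical points -/

lemma fderiv_eq_zero_of_gradSq_eq_zero {f : (Fin d → ℝ) → ℝ} {p : Fin d → ℝ}
    (h : gradSq f p = 0) : fderiv ℝ f p = 0 := by
  have hpd := (Finset.sum_eq_zero_iff_of_nonneg fun _ _ => sq_nonneg _).1 h
  refine ContinuousLinearMap.coe_injective (LinearMap.pi_ext' fun k => ?_)
  ext
  simpa [pd] using hpd k (Finset.mem_univ k)

lemma fderiv_pd_apply_eq_vecMul_hess (f : (Fin d → ℝ) → ℝ) (p v : Fin d → ℝ) (k : Fin d) :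
    fderiv ℝ (pd f k) p v = Matrix.vecMul v (hess f p) k := by
  conv_lhs => rw [pi_eq_sum_univ' v]
  rw [map_sum]
  simp only [Matrix.vecMul, dotProduct, map_smul, smul_eq_mul, hess, Matrix.of_apply]
  rfl

lemma norm_pd_sq_le_gradSq (f : (Fin d → ℝ) → ℝ) (p : Fin d → ℝ) :
    ‖fun k => pd f k p‖ ^ 2 ≤ gradSq f p := by
  refine (Real.le_sqrt (norm_nonneg _) (gradSq_nonneg f p)).1 ?_
  refine (pi_norm_le_iff_of_nonneg (Real.sqrt_nonneg _)).2 fun k => ?_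
  exact Real.abs_le_sqrt (pd_sq_le_gradSq f k p)

lemma IsMorse.isBigO_gradSq {f : (Fin d → ℝ) → ℝ} (hM : IsMorse f) (hf : ContDiff ℝ 2 f)
    {p₀ : Fin d → ℝ} (h₀ : gradSq f p₀ = 0) :
    (fun p => ‖p - p₀‖ ^ 2) =O[nhds p₀] gradSq f := by
  have hcrit := fderiv_eq_zero_of_gradSq_eq_zero h₀
  let L : (Fin d → ℝ) →L[ℝ] (Fin d → ℝ) := .pi fun k => fderiv ℝ (pd f k) p₀
  have hgrad : HasFDerivAt (fun p k => pd f k p) L p₀ := hasFDerivAt_pi.2 fun k =>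
    ((contDiff_pd hf (m := 1) (by norm_num) k).differentiable one_ne_zero p₀).hasFDerivAt
  have hker : LinearMap.ker (L : (Fin d → ℝ) →ₗ[ℝ] (Fin d → ℝ)) = ⊥ := by
    refine LinearMap.ker_eq_bot'.2 fun v hv => ?_
    refine Matrix.eq_zero_of_vecMul_eq_zero (hM p₀ hcrit) ?_
    rw [← hv]
    exact funext fun k => (fderiv_pd_apply_eq_vecMul_hess f p₀ v k).symm
  have hemb := (L : (Fin d → ℝ) →ₗ[ℝ] (Fin d → ℝ)).isClosedEmbedding_of_injective hker
  have hpd₀ : (fun k => pd f k p₀) = 0 := by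
    simp only [pd, hcrit, zero_apply, ← Pi.zero_def]
  have hlinear := (hgrad.isTheta_sub hemb.isInducing).isBigO_symm.norm_norm.pow 2
  rw [hpd₀] at hlinear
  refine hlinear.trans (Asymptotics.isBigO_of_le _ fun p => ?_)
  rw [Real.norm_of_nonneg (by positivity), Real.norm_of_nonneg (gradSq_nonneg f p)]
  simpa only [sub_zero] using norm_pd_sq_le_gradSq f p

lemma IsMorse.ae_gradSq_ne_zero {f : (Fin d → ℝ) → ℝ} (hM : IsMorse f) (hf : ContDiff ℝ 2 f)
    (hd : 0 < d) : ∀ᵐ p : Fin d → ℝ, gradSq f p ≠ 0 := by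
  have : Nonempty (Fin d) := ⟨⟨0, hd⟩⟩
  rw [ae_iff]
  simp only [not_not]
  refine measure_null_of_locally_null _ fun p hp => ⟨{p}, ?_, measure_singleton p⟩
  rw [mem_nhdsWithin_iff_eventually]
  filter_upwards [(hM.isBigO_gradSq hf hp).eq_zero_imp] with q hq hq₀
  simpa [sub_eq_zero] using hq hq₀

lemma integrableAtFilter_norm_sub_rpow_neg (hd : 0 < d) {s : ℝ} (hs : s < d) (p₀ : Fin d → ℝ) :
    IntegrableAtFilter (fun p => ‖p - p₀‖ ^ (-s)) (nhds p₀) := by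
  have hball : IntegrableOn (fun p : Fin d → ℝ => ‖p‖ ^ (-s)) (Metric.ball 0 1) := by
    refine integrableOn_ball_of_norm_le_rpow (C := 1) (by rwa [Module.finrank_fin_fun])
      (by rwa [Module.finrank_fin_fun])
      (Filter.Eventually.of_forall fun p => ?_)
      (measurable_norm.pow_const _).aestronglyMeasurable
    rw [one_mul, Real.norm_of_nonneg (by positivity)]
  refine ⟨Metric.ball p₀ 1, Metric.ball_mem_nhds _ one_pos, ?_⟩
  have hpre : (fun p => p - p₀) ⁻¹' Metric.ball (0 : Fin d → ℝ) 1 = Metric.ball p₀ 1 := by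
    ext p
    simp [dist_eq_norm]
  rw [← hpre]
  exact ((measurePreserving_sub_right volume p₀).integrableOn_comp_preimage
    (MeasurableEquiv.subRight p₀).measurableEmbedding).2 hball

lemma IsMorse.locallyIntegrable_inv_gradSq_rpow {f : (Fin d → ℝ) → ℝ} (hM : IsMorse f)
    (hf : ContDiff ℝ 2 f) {s : ℝ} (hs : 0 ≤ s) (hsd : 2 * s < d) :
    LocallyIntegrable fun p => (gradSq f p)⁻¹ ^ s := by
  have hN : Continuous (gradSq f) := (contDiff_gradSq hf (m := 1) (by norm_num)).continuous
  have hd : 0 < d := by exact_mod_cast (by positivity : 0 ≤ 2 * s).trans_lt hsd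
  have hmeas (p₀ : Fin d → ℝ) :
      StronglyMeasurableAtFilter (fun p => (gradSq f p)⁻¹ ^ s) (nhds p₀) :=
    (hN.measurable.inv.pow_const s).stronglyMeasurable.stronglyMeasurableAtFilter
  intro p₀
  by_cases h₀ : gradSq f p₀ = 0
  · have hO := (hM.isBigO_gradSq hf h₀).inv_rev
      (Filter.Eventually.of_forall fun p hp => by
        rw [pow_eq_zero_iff two_ne_zero, norm_eq_zero, sub_eq_zero] at hp
        rwa [hp])
    have hrpow := hO.rpow hs (Filter.Eventually.of_forall fun p => by simp)
    have hpow (p : Fin d → ℝ) : (‖p - p₀‖ ^ 2)⁻¹ ^ s = ‖p - p₀‖ ^ (-(2 * s)) := by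
      rw [Real.rpow_neg (norm_nonneg _), Real.rpow_mul (norm_nonneg _), Real.rpow_two,
        Real.inv_rpow (by positivity)]
    simp only [hpow] at hrpow
    exact hrpow.integrableAtFilter (hmeas p₀) (integrableAtFilter_norm_sub_rpow_neg hd hsd p₀)
  · have hcont : ContinuousAt (fun p => (gradSq f p)⁻¹ ^ s) p₀ :=
      (hN.continuousAt.inv₀ h₀).rpow_const (Or.inr hs)
    exact (volume.finiteAt_nhds p₀).integrableAtFilter_of_tendsto (hmeas p₀) hcont

lemma IsMorse.integrableOn_inv_gradSq_rpow {f : (Fin d → ℝ) → ℝ} (hM : IsMorse f)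
    (hf : ContDiff ℝ 2 f) {s : ℝ} (hs : 0 ≤ s) (hsd : 2 * s < d) :
    IntegrableOn (fun p => (gradSq f p)⁻¹ ^ s) (torusBox d) :=
  (hM.locallyIntegrable_inv_gradSq_rpow hf hs hsd).integrableOn_isCompact isCompact_torusBox

/-! ### Integration by parts along the gradient -/

/-- The regularized field `∇f / (|∇f|² + δ)`. Differentiating `φ ∘ f` along it gives
`φ' ∘ f · |∇f|² / (|∇f|² + δ)`, which tends to `φ' ∘ f` as `δ → 0`. -/
def regField (f : (Fin d → ℝ) → ℝ) (δ : ℝ) (k : Fin d) (p : Fin d → ℝ) : ℝ :=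
  pd f k p * (gradSq f p + δ)⁻¹

section RegField

variable {f : (Fin d → ℝ) → ℝ} {δ B : ℝ}

lemma gradSq_add_pos (hδ : 0 < δ) (p : Fin d → ℝ) : 0 < gradSq f p + δ :=
  add_pos_of_nonneg_of_pos (gradSq_nonneg f p) hδ

lemma contDiff_inv_gradSq_add (hf : ContDiff ℝ 2 f) (hδ : 0 < δ) :
    ContDiff ℝ 1 fun p => (gradSq f p + δ)⁻¹ :=
  ((contDiff_gradSq hf (by norm_num)).add contDiff_const).inv fun p => (gradSq_add_pos hδ p).ne'

lemma contDiff_regField (hf : ContDiff ℝ 2 f) (hδ : 0 < δ) (k : Fin d) :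
    ContDiff ℝ 1 (regField f δ k) :=
  (contDiff_pd hf (by norm_num) k).mul (contDiff_inv_gradSq_add hf hδ)

lemma IsTorusPeriodic.regField (hf : IsTorusPeriodic f) (δ : ℝ) (k : Fin d) :
    IsTorusPeriodic (regField f δ k) := fun p m => by
  simp only [LatSch.regField, hf.pd k p m, hf.gradSq p m]

lemma abs_pd_mul_pd_le_gradSq (f : (Fin d → ℝ) → ℝ) (i j : Fin d) (p : Fin d → ℝ) :
    |pd f i p * pd f j p| ≤ gradSq f p := by
  have hi := pd_sq_le_gradSq f i p
  have hj := pd_sq_le_gradSq f j p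
  exact abs_le.2 ⟨by nlinarith [sq_nonneg (pd f i p + pd f j p)],
    by nlinarith [sq_nonneg (pd f i p - pd f j p)]⟩

lemma hasFDerivAt_gradSq (hf : ContDiff ℝ 2 f) (p : Fin d → ℝ) :
    HasFDerivAt (gradSq f) (∑ j, (2 * pd f j p) • fderiv ℝ (pd f j) p) p := by
  refine HasFDerivAt.fun_sum fun j _ => ?_
  simpa using
    ((contDiff_pd hf (m := 1) (by norm_num) j).differentiable one_ne_zero p).hasFDerivAt.pow 2

lemma abs_pd_mul_partialDeriv_gradSq_le (hf : ContDiff ℝ 2 f)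
    (hB : ∀ k, HasC1Bound (pd f k) B) (k : Fin d) (p : Fin d → ℝ) :
    |pd f k p * partialDeriv (gradSq f) k p| ≤ 2 * d * B * gradSq f p := by
  have hexpand : pd f k p * partialDeriv (gradSq f) k p =
      ∑ j, 2 * (pd f k p * pd f j p) * partialDeriv (pd f j) k p := by
    rw [partialDeriv, (hasFDerivAt_gradSq hf p).fderiv, sum_apply, Finset.mul_sum]
    refine Finset.sum_congr rfl fun j _ => ?_
    rw [smul_apply, smul_eq_mul]
    ring
  rw [hexpand]
  calc |∑ j, 2 * (pd f k p * pd f j p) * partialDeriv (pd f j) k p|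
      ≤ ∑ _j : Fin d, 2 * gradSq f p * B := by
        refine (Finset.abs_sum_le_sum_abs _ _).trans (Finset.sum_le_sum fun j _ => ?_)
        rw [abs_mul, abs_mul, abs_two]
        have hN := gradSq_nonneg f p
        gcongr
        exacts [abs_pd_mul_pd_le_gradSq f k j p, (hB j).norm_partialDeriv_le k p]
    _ = 2 * d * B * gradSq f p := by
        rw [Finset.sum_const, Finset.card_univ, Fintype.card_fin, nsmul_eq_mul]
        ring

lemma partialDeriv_regField (hf : ContDiff ℝ 2 f) (hδ : 0 < δ) (k : Fin d) (p : Fin d → ℝ) :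
    partialDeriv (regField f δ k) k p = partialDeriv (pd f k) k p * (gradSq f p + δ)⁻¹ -
      pd f k p * partialDeriv (gradSq f) k p * ((gradSq f p + δ) ^ 2)⁻¹ := by
  have hpd :=
    ((contDiff_pd hf (m := 1) (by norm_num) k).differentiable one_ne_zero p).hasFDerivAt
  have hN := (hasFDerivAt_gradSq hf p).differentiableAt.hasFDerivAt.add_const δ
  have hinv := (hasDerivAt_inv (gradSq_add_pos hδ p).ne').comp_hasFDerivAt p hN
  rw [partialDeriv, show fderiv ℝ (regField f δ k) p = _ from (hpd.mul hinv).fderiv]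
  simp only [add_apply, smul_apply, smul_eq_mul, Function.comp_apply]
  ring

lemma abs_partialDeriv_regField_le (hf : ContDiff ℝ 2 f) (hδ : 0 < δ)
    (hB : ∀ k, HasC1Bound (pd f k) B) (k : Fin d) (p : Fin d → ℝ) :
    |partialDeriv (regField f δ k) k p| ≤ (2 * d + 1) * B * (gradSq f p + δ)⁻¹ := by
  have hpos : 0 < gradSq f p + δ := gradSq_add_pos hδ p
  have hB₀ := (hB k).nonneg
  rw [partialDeriv_regField hf hδ]
  calc |partialDeriv (pd f k) k p * (gradSq f p + δ)⁻¹ -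
        pd f k p * partialDeriv (gradSq f) k p * ((gradSq f p + δ) ^ 2)⁻¹|
      ≤ |partialDeriv (pd f k) k p| * (gradSq f p + δ)⁻¹ +
        |pd f k p * partialDeriv (gradSq f) k p| * ((gradSq f p + δ) ^ 2)⁻¹ := by
        refine (abs_sub _ _).trans_eq ?_
        rw [abs_mul, abs_mul _ ((gradSq f p + δ) ^ 2)⁻¹, abs_of_pos (inv_pos.2 hpos),
          abs_of_pos (inv_pos.2 (pow_pos hpos 2))]
    _ ≤ B * (gradSq f p + δ)⁻¹ +
        2 * d * B * (gradSq f p + δ) * ((gradSq f p + δ) ^ 2)⁻¹ := by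
        gcongr
        · exact (hB k).norm_partialDeriv_le k p
        · refine (abs_pd_mul_partialDeriv_gradSq_le hf hB k p).trans ?_
          gcongr
          exact le_add_of_nonneg_right hδ.le
    _ = (2 * d + 1) * B * (gradSq f p + δ)⁻¹ := by
        field_simp
        ring

lemma norm_partialDeriv_regField_mul_le (hf : ContDiff ℝ 2 f) (hδ : 0 < δ)
    (hB : ∀ k, HasC1Bound (pd f k) B) {u : (Fin d → ℝ) → ℂ} {M : ℝ} (hu : HasC1Bound u M)
    (k : Fin d) (p : Fin d → ℝ) :
    ‖partialDeriv (fun q => (regField f δ k q : ℂ) * u q) k p‖ ≤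
      (2 * d + 2) * B * M * (gradSq f p + δ)⁻¹ := by
  have hpos : 0 < gradSq f p + δ := gradSq_add_pos hδ p
  have := hu.nonneg
  have hX := Complex.ofRealCLM.hasFDerivAt.comp p
    ((contDiff_regField hf hδ k).differentiable one_ne_zero p).hasFDerivAt
  have hproduct : partialDeriv (fun q => (regField f δ k q : ℂ) * u q) k p =
      (regField f δ k p : ℂ) * partialDeriv u k p +
        ((partialDeriv (regField f δ k) k p : ℝ) : ℂ) * u p := by
    have hmul := hX.mul' (hu.differentiableAt p).hasFDerivAt
    rw [partialDeriv, show fderiv ℝ (fun q => (regField f δ k q : ℂ) * u q) p = _ from hmul.fderiv]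
    rfl
  have hfield : ‖(regField f δ k p : ℂ)‖ ≤ B * (gradSq f p + δ)⁻¹ := by
    rw [Complex.norm_real, regField, norm_mul, Real.norm_of_nonneg (inv_pos.2 hpos).le]
    gcongr
    exact (hB k).norm_le p
  have hderiv : ‖((partialDeriv (regField f δ k) k p : ℝ) : ℂ)‖ ≤
      (2 * d + 1) * B * (gradSq f p + δ)⁻¹ := by
    rw [Complex.norm_real]
    exact abs_partialDeriv_regField_le hf hδ hB k p
  rw [hproduct]
  calc _ ≤ B * (gradSq f p + δ)⁻¹ * M + (2 * d + 1) * B * (gradSq f p + δ)⁻¹ * M :=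
        norm_add_le_of_le (norm_mul_le_of_le hfield (hu.norm_partialDeriv_le k p))
          (norm_mul_le_of_le hderiv (hu.norm_le p))
    _ = (2 * d + 2) * B * M * (gradSq f p + δ)⁻¹ := by ring

lemma sum_regField_mul_partialDeriv_comp (hf : Differentiable ℝ f) {φ φ' : ℝ → ℂ}
    (hφ : ∀ t, HasDerivAt φ (φ' t) t) (u : (Fin d → ℝ) → ℂ) (p : Fin d → ℝ) :
    ∑ k, (regField f δ k p : ℂ) * u p * partialDeriv (fun q => φ (f q)) k p =
      (gradSq f p / (gradSq f p + δ)) • (u p * φ' (f p)) := by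
  have hchain (k : Fin d) : partialDeriv (fun q => φ (f q)) k p = (pd f k p : ℂ) * φ' (f p) := by
    have hcomp := (hφ (f p)).hasFDerivAt.comp p (hf p).hasFDerivAt
    rw [partialDeriv, show fderiv ℝ (fun q => φ (f q)) p = _ from hcomp.fderiv]
    exact real_smul
  have hterm (k : Fin d) : (regField f δ k p : ℂ) * u p * partialDeriv (fun q => φ (f q)) k p =
      ((pd f k p ^ 2 : ℝ) : ℂ) * ((((gradSq f p + δ)⁻¹ : ℝ) : ℂ) * (u p * φ' (f p))) := by
    rw [hchain, regField]
    push_cast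
    ring
  rw [Finset.sum_congr rfl fun k _ => hterm k, ← Finset.sum_mul, ← Complex.ofReal_sum,
    ← mul_assoc, ← Complex.ofReal_mul, ← div_eq_mul_inv, real_smul]
  rfl

lemma norm_integral_regularized_mul_deriv_comp_le (hf : ContDiff ℝ 2 f) (hper : IsTorusPeriodic f)
    (hδ : 0 < δ) (hB : ∀ k, HasC1Bound (pd f k) B) {u : (Fin d → ℝ) → ℂ} {M : ℝ}
    (hu : HasC1Bound u M) {φ φ' : ℝ → ℂ} (hφ : ∀ t, HasDerivAt φ (φ' t) t) (hφ' : Continuous φ') :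
    ‖∫ p in torusBox d, (gradSq f p / (gradSq f p + δ)) • (u p * φ' (f p))‖ ≤
      d * ((2 * d + 2) * B * M) * ∫ p in torusBox d, ‖φ (f p)‖ * (gradSq f p + δ)⁻¹ := by
  have hf₁ : ContDiff ℝ 1 f := hf.of_le one_le_two
  have hφ₁ : ContDiff ℝ 1 φ := by
    rw [contDiff_one_iff_deriv, funext fun t => (hφ t).deriv]
    exact ⟨fun t => (hφ t).differentiableAt, hφ'⟩
  have hparts := integral_sum_mul_partialDeriv
    (X := fun k p => (regField f δ k p : ℂ) * u p) (b := fun p => φ (f p))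
    (fun k => (Complex.ofRealCLM.contDiff.comp (contDiff_regField hf hδ k)).mul hu.contDiff)
    (fun k p m => by simp only [hper.regField δ k p m, hu.periodic p m]) (hφ₁.comp hf₁)
    fun p m => congrArg φ (hper p m)
  simp only [sum_regField_mul_partialDeriv_comp (hf₁.differentiable one_ne_zero) hφ] at hparts
  rw [hparts, norm_neg, ← integral_const_mul]
  refine norm_integral_le_of_norm_le (integrableOn_torusBox ?_)
    (Filter.Eventually.of_forall fun p => ?_)
  · exact continuous_const.mul ((hφ₁.comp hf₁).continuous.norm.mul
      (contDiff_inv_gradSq_add hf hδ).continuous)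
  · calc _ ≤ (∑ _k : Fin d, (2 * d + 2) * B * M * (gradSq f p + δ)⁻¹) * ‖φ (f p)‖ :=
          norm_mul_le_of_le (norm_sum_le_of_le _ fun k _ =>
            norm_partialDeriv_regField_mul_le hf hδ hB hu k p) le_rfl
      _ = d * ((2 * d + 2) * B * M) * (‖φ (f p)‖ * (gradSq f p + δ)⁻¹) := by
          rw [Finset.sum_const, Finset.card_univ, Fintype.card_fin, nsmul_eq_mul]
          ring

end RegField

lemma tendsto_integral_regularized {N : (Fin d → ℝ) → ℝ} (hN : Continuous N)
    (hN₀ : ∀ p, 0 ≤ N p) (hne : ∀ᵐ p, N p ≠ 0) {b : (Fin d → ℝ) → ℂ} (hb : Continuous b) :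
    Filter.Tendsto (fun n : ℕ => ∫ p in torusBox d, (N p / (N p + 1 / ((n : ℝ) + 1))) • b p)
      Filter.atTop (nhds (∫ p in torusBox d, b p)) := by
  have hpos (n : ℕ) (p : Fin d → ℝ) : 0 < N p + 1 / ((n : ℝ) + 1) :=
    add_pos_of_nonneg_of_pos (hN₀ p) (by positivity)
  refine tendsto_integral_of_dominated_convergence (fun p => ‖b p‖) (fun n => ?_)
    (integrableOn_torusBox hb).norm (fun n => Filter.Eventually.of_forall fun p => ?_) ?_
  · exact ((hN.div (by fun_prop) fun p => (hpos n p).ne').smul hb).aestronglyMeasurable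
  · rw [norm_smul, Real.norm_of_nonneg (div_nonneg (hN₀ p) (hpos n p).le)]
    refine mul_le_of_le_one_left (norm_nonneg _) ((div_le_one (hpos n p)).2 ?_)
    exact le_add_of_nonneg_right (by positivity)
  · filter_upwards [ae_restrict_of_ae hne] with p hp
    have hquot : Filter.Tendsto (fun n : ℕ => N p / (N p + 1 / ((n : ℝ) + 1))) Filter.atTop
        (nhds (N p / (N p + 0))) :=
      tendsto_const_nhds.div
        (tendsto_const_nhds.add tendsto_one_div_add_atTop_nhds_zero_nat) (by rwa [add_zero])
    simpa [div_self hp] using hquot.smul_const (b p)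

lemma IsMorse.integrableOn_mul_inv_gradSq (hd : 3 ≤ d) {f : (Fin d → ℝ) → ℝ} (hM : IsMorse f)
    (hf : ContDiff ℝ 2 f) {b : (Fin d → ℝ) → ℝ} (hb : Continuous b) :
    IntegrableOn (fun p => b p * (gradSq f p)⁻¹) (torusBox d) := by
  have hd' : (3 : ℝ) ≤ d := by exact_mod_cast hd
  have hinv : IntegrableOn (fun p => (gradSq f p)⁻¹) (torusBox d) := by
    simpa only [Real.rpow_one] using
      hM.integrableOn_inv_gradSq_rpow hf zero_le_one (by linarith)
  exact hinv.continuousOn_mul hb.continuousOn isCompact_torusBox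

lemma IsMorse.exists_norm_integral_mul_deriv_comp_le (hd : 3 ≤ d) {f : (Fin d → ℝ) → ℝ}
    (hM : IsMorse f) (hf : ContDiff ℝ 2 f) (hper : IsTorusPeriodic f) :
    ∃ C, 0 ≤ C ∧ ∀ (u : (Fin d → ℝ) → ℂ) (M : ℝ), HasC1Bound u M →
      ∀ φ φ' : ℝ → ℂ, (∀ t, HasDerivAt φ (φ' t) t) → Continuous φ' →
      ‖∫ p in torusBox d, u p * φ' (f p)‖ ≤
        C * M * ∫ p in torusBox d, ‖φ (f p)‖ * (gradSq f p)⁻¹ := by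
  obtain ⟨B, hBpos, hB⟩ := HasC1Bound.exists_forall_pd hf hper
  refine ⟨d * ((2 * d + 2) * B), by positivity, fun u M hu φ φ' hφ hφ' => ?_⟩
  have hN : Continuous (gradSq f) := (contDiff_gradSq hf (m := 1) (by norm_num)).continuous
  have hne := hM.ae_gradSq_ne_zero hf (by lia)
  have hφf : Continuous fun p => ‖φ (f p)‖ :=
    ((continuous_iff_continuousAt.2 fun t => (hφ t).continuousAt).comp hf.continuous).norm
  have hlim := tendsto_integral_regularized hN (gradSq_nonneg f) hne
    (hu.contDiff.continuous.mul (hφ'.comp hf.continuous))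
  refine le_of_tendsto hlim.norm (Filter.Eventually.of_forall fun n => ?_)
  have hδ : (0 : ℝ) < 1 / ((n : ℝ) + 1) := by positivity
  refine (norm_integral_regularized_mul_deriv_comp_le hf hper hδ hB hu hφ hφ').trans ?_
  rw [← mul_assoc (d : ℝ)]
  refine mul_le_mul_of_nonneg_left (integral_mono_ae (integrableOn_torusBox ?_)
    (hM.integrableOn_mul_inv_gradSq hd hf hφf) ?_) (mul_nonneg (by positivity) hu.nonneg)
  · exact hφf.mul (contDiff_inv_gradSq_add hf hδ).continuous
  · filter_upwards [ae_restrict_of_ae hne] with p hp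
    have hpos : 0 < gradSq f p := (gradSq_nonneg f p).lt_of_ne' hp
    have hle : gradSq f p ≤ gradSq f p + 1 / ((n : ℝ) + 1) := le_add_of_nonneg_right hδ.le
    gcongr

/-! ### Bounds uniform in the spectral parameter -/

lemma norm_sub_ofReal_rpow (z : ℂ) (t b : ℝ) :
    ‖z - t‖ ^ b = ((t - z.re) ^ 2 + z.im ^ 2) ^ (b / 2) := by
  have hsq : (t - z.re) ^ 2 + z.im ^ 2 = ‖z - t‖ ^ 2 := by
    rw [← Complex.normSq_eq_norm_sq, Complex.normSq_apply, sub_re, sub_im, ofReal_re, ofReal_im]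
    ring
  rw [hsq, ← Real.rpow_natCast_mul (norm_nonneg _)]
  congr 1
  push_cast
  ring

lemma norm_sub_ofReal_pos {z : ℂ} (hz : z.im ≠ 0) (t : ℝ) : 0 < ‖z - t‖ :=
  norm_pos_iff.2 (sub_ofReal_ne_zero hz t)

lemma hasDerivAt_sub_re_mul_norm_sub_rpow {z : ℂ} (hz : z.im ≠ 0) (b t : ℝ) :
    HasDerivAt (fun t : ℝ => (t - z.re) * ‖z - t‖ ^ (-b))
      (((1 - b) * (t - z.re) ^ 2 + z.im ^ 2) * ‖z - t‖ ^ (-b - 2)) t := by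
  have hpos : 0 < (t - z.re) ^ 2 + z.im ^ 2 := by positivity
  have hlin : HasDerivAt (fun t => t - z.re) 1 t := (hasDerivAt_id t).sub_const z.re
  have hpow := ((hlin.pow 2).add_const (z.im ^ 2)).rpow_const (p := -b / 2) (Or.inl hpos.ne')
  simp only [norm_sub_ofReal_rpow]
  refine (hlin.mul hpow).congr_deriv ?_
  have hexp : ((t - z.re) ^ 2 + z.im ^ 2) ^ (-b / 2) =
      ((t - z.re) ^ 2 + z.im ^ 2) * ((t - z.re) ^ 2 + z.im ^ 2) ^ (-b / 2 - 1) := by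
    rw [Real.rpow_sub_one hpos.ne']
    field_simp
  rw [show (-b - 2) / 2 = -b / 2 - 1 by ring]
  simp only [Pi.pow_apply, hexp]
  push_cast
  ring

lemma one_sub_mul_norm_sub_rpow_le {z : ℂ} (hz : z.im ≠ 0) {b : ℝ} (hb : 0 ≤ b) (t : ℝ) :
    (1 - b) * ‖z - t‖ ^ (-b) ≤
      ((1 - b) * (t - z.re) ^ 2 + z.im ^ 2) * ‖z - t‖ ^ (-b - 2) := by
  have hsq : ‖z - t‖ ^ 2 = (t - z.re) ^ 2 + z.im ^ 2 := by
    simpa using norm_sub_ofReal_rpow z t 2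
  have hexp : ‖z - t‖ ^ (-b) = ((t - z.re) ^ 2 + z.im ^ 2) * ‖z - t‖ ^ (-b - 2) := by
    rw [← hsq, ← Real.rpow_natCast, ← Real.rpow_add (norm_sub_ofReal_pos hz t)]
    congr 1
    push_cast
    ring
  rw [hexp, ← mul_assoc]
  refine mul_le_mul_of_nonneg_right ?_ (by positivity)
  nlinarith [mul_nonneg hb (sq_nonneg z.im)]

lemma abs_sub_re_mul_norm_sub_rpow_le {z : ℂ} (hz : z.im ≠ 0) (b t : ℝ) :
    |(t - z.re) * ‖z - t‖ ^ (-b)| ≤ ‖z - t‖ ^ (1 - b) := by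
  have hre : |t - z.re| ≤ ‖z - t‖ := by
    simpa [abs_sub_comm] using Complex.abs_re_le_norm (z - t)
  rw [abs_mul, abs_of_nonneg (by positivity : 0 ≤ ‖z - t‖ ^ (-b)), sub_eq_add_neg 1,
    Real.rpow_add (norm_sub_ofReal_pos hz t), Real.rpow_one]
  gcongr

lemma continuous_norm_sub_rpow {z : ℂ} (hz : z.im ≠ 0) (b : ℝ) :
    Continuous fun t : ℝ => ‖z - t‖ ^ b :=
  (by fun_prop : Continuous fun t : ℝ => ‖z - t‖).rpow_const fun t =>
    Or.inl (norm_sub_ofReal_pos hz t).ne'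

lemma exists_norm_log_le_rpow {s ρ : ℝ} (hs : 0 < s) (hρ : 0 ≤ ρ) :
    ∃ C, 0 ≤ C ∧ ∀ w : ℂ, w ≠ 0 → ‖w‖ ≤ ρ → ‖Complex.log w‖ ≤ C * ‖w‖ ^ (-s) := by
  have := Real.pi_pos
  refine ⟨1 / s + (ρ + π) * ρ ^ s, by positivity, fun w hw hwρ => ?_⟩
  have hpos : 0 < ‖w‖ := norm_pos_iff.2 hw
  have hone : 1 ≤ ρ ^ s * ‖w‖ ^ (-s) := by
    rw [Real.rpow_neg hpos.le, ← div_eq_mul_inv, one_le_div (by positivity)]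
    gcongr
  have hlog : |Real.log ‖w‖| ≤ ‖w‖ ^ (-s) / s + ρ := by
    have hneg := Real.log_le_rpow_div (inv_nonneg.2 hpos.le) hs
    rw [Real.log_inv, Real.inv_rpow hpos.le, ← Real.rpow_neg hpos.le] at hneg
    have hdiv : 0 ≤ ‖w‖ ^ (-s) / s := by positivity
    exact abs_le.2 ⟨by linarith, by linarith [Real.log_le_self hpos.le]⟩
  calc ‖Complex.log w‖ ≤ |Real.log ‖w‖| + π := by
        refine (Complex.norm_le_abs_re_add_abs_im _).trans ?_
        rw [Complex.log_re, Complex.log_im]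
        exact add_le_add_right (Complex.abs_arg_le_pi w) _
    _ ≤ ‖w‖ ^ (-s) / s + (ρ + π) * 1 := by linarith
    _ ≤ ‖w‖ ^ (-s) / s + (ρ + π) * (ρ ^ s * ‖w‖ ^ (-s)) := by gcongr
    _ = (1 / s + (ρ + π) * ρ ^ s) * ‖w‖ ^ (-s) := by ring

lemma mul_le_rpow_add_rpow {a b p q : ℝ} (ha : 0 ≤ a) (hb : 0 ≤ b) (hpq : p.HolderConjugate q) :
    a * b ≤ a ^ p + b ^ q :=
  (Real.young_inequality_of_nonneg ha hb hpq).trans <| add_le_add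
    (div_le_self (Real.rpow_nonneg ha p) hpq.lt.le)
    (div_le_self (Real.rpow_nonneg hb q) hpq.symm.lt.le)

section UniformBounds

variable {f : (Fin d → ℝ) → ℝ}

lemma IsMorse.integral_abs_sub_re_mul_norm_sub_rpow_mul_inv_gradSq_le (hd : 3 ≤ d)
    (hM : IsMorse f) (hf : ContDiff ℝ 2 f) {b : ℝ} (hb : b ≤ 1) {z : ℂ} (hz : z.im ≠ 0) {ρ : ℝ}
    (hρ : ∀ p, ‖z - f p‖ ≤ ρ) :
    ∫ p in torusBox d, |(f p - z.re) * ‖z - f p‖ ^ (-b)| * (gradSq f p)⁻¹ ≤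
      ρ ^ (1 - b) * ∫ p in torusBox d, (gradSq f p)⁻¹ := by
  have hfc := hf.continuous
  have hφ : Continuous fun p => |(f p - z.re) * ‖z - f p‖ ^ (-b)| :=
    ((hfc.sub continuous_const).mul ((continuous_norm_sub_rpow hz _).comp hfc)).abs
  rw [← integral_const_mul]
  refine integral_mono (hM.integrableOn_mul_inv_gradSq hd hf hφ)
    (hM.integrableOn_mul_inv_gradSq hd hf continuous_const) fun p => ?_
  refine mul_le_mul_of_nonneg_right ?_ (inv_nonneg.2 (gradSq_nonneg f p))
  exact (abs_sub_re_mul_norm_sub_rpow_le hz b (f p)).trans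
    (Real.rpow_le_rpow (norm_nonneg _) (hρ p) (sub_nonneg.2 hb))

lemma IsMorse.exists_integral_norm_sub_rpow_neg_le (hd : 3 ≤ d) (hM : IsMorse f)
    (hf : ContDiff ℝ 2 f) (hper : IsTorusPeriodic f) {b ρ : ℝ} (hb₀ : 0 ≤ b) (hb₁ : b < 1)
    (hρ : 0 ≤ ρ) :
    ∃ C, 0 ≤ C ∧ ∀ z : ℂ, z.im ≠ 0 → (∀ p, ‖z - f p‖ ≤ ρ) →
      ∫ p in torusBox d, ‖z - f p‖ ^ (-b) ≤ C := by
  obtain ⟨C, hC, hparts⟩ := hM.exists_norm_integral_mul_deriv_comp_le hd hf hper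
  have hI : 0 ≤ ∫ p in torusBox d, (gradSq f p)⁻¹ :=
    integral_nonneg fun p => inv_nonneg.2 (gradSq_nonneg f p)
  have hgap : 0 < 1 - b := sub_pos.2 hb₁
  refine ⟨(1 - b)⁻¹ * (C * (ρ ^ (1 - b) * ∫ p in torusBox d, (gradSq f p)⁻¹)), by positivity,
    fun z hz hzρ => ?_⟩
  have hfc := hf.continuous
  let φ (t : ℝ) : ℝ := (t - z.re) * ‖z - t‖ ^ (-b)
  let φ' (t : ℝ) : ℝ := ((1 - b) * (t - z.re) ^ 2 + z.im ^ 2) * ‖z - t‖ ^ (-b - 2)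
  have hφ (t : ℝ) : HasDerivAt φ (φ' t) t := hasDerivAt_sub_re_mul_norm_sub_rpow hz b t
  have hφ'c : Continuous φ' :=
    (by fun_prop : Continuous fun t : ℝ => (1 - b) * (t - z.re) ^ 2 + z.im ^ 2).mul
      (continuous_norm_sub_rpow hz _)
  have hmain := hparts _ _ (HasC1Bound.const (1 : ℂ)) (fun t => φ t) (fun t => φ' t)
    (fun t => (hφ t).ofReal_comp) (Complex.continuous_ofReal.comp hφ'c)
  simp only [one_mul, norm_one, mul_one, integral_complex_ofReal, Complex.norm_real] at hmain
  have hlower : (1 - b) * ∫ p in torusBox d, ‖z - f p‖ ^ (-b) ≤ ∫ p in torusBox d, φ' (f p) := by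
    rw [← integral_const_mul]
    exact integral_mono
      ((integrableOn_torusBox ((continuous_norm_sub_rpow hz _).comp hfc)).const_mul _)
      (integrableOn_torusBox (hφ'c.comp hfc)) fun p => one_sub_mul_norm_sub_rpow_le hz hb₀ (f p)
  rw [← div_eq_inv_mul, le_div_iff₀' hgap]
  calc _ ≤ ∫ p in torusBox d, φ' (f p) := hlower
    _ ≤ C * ∫ p in torusBox d, ‖φ (f p)‖ * (gradSq f p)⁻¹ := (le_abs_self _).trans hmain
    _ ≤ _ := mul_le_mul_of_nonneg_left
      (hM.integral_abs_sub_re_mul_norm_sub_rpow_mul_inv_gradSq_le hd hf hb₁.le hz hzρ) hC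

lemma IsMorse.exists_integral_norm_log_mul_inv_gradSq_le (hd : 3 ≤ d) (hM : IsMorse f)
    (hf : ContDiff ℝ 2 f) (hper : IsTorusPeriodic f) {ρ : ℝ} (hρ : 0 ≤ ρ) :
    ∃ C, 0 ≤ C ∧ ∀ z : ℂ, z.im ≠ 0 → (∀ p, ‖z - f p‖ ≤ ρ) →
      ∫ p in torusBox d, ‖Complex.log (z - f p)‖ * (gradSq f p)⁻¹ ≤ C := by
  -- Young's exponents are `5` and `5 / 4`: `|∇f|^{-5/2}` is integrable because `5 / 2 < 3`.
  obtain ⟨L, hL, hlog⟩ := exists_norm_log_le_rpow (s := 1 / 10) (by norm_num) hρ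
  obtain ⟨C, hC, hsub⟩ := hM.exists_integral_norm_sub_rpow_neg_le hd hf hper
    (b := 1 / 2) (by norm_num) (by norm_num) hρ
  have hd' : (3 : ℝ) ≤ d := by exact_mod_cast hd
  have hN := hM.integrableOn_inv_gradSq_rpow hf (s := 5 / 4) (by norm_num) (by linarith)
  have hI : 0 ≤ ∫ p in torusBox d, (gradSq f p)⁻¹ ^ (5 / 4 : ℝ) :=
    integral_nonneg fun p => Real.rpow_nonneg (inv_nonneg.2 (gradSq_nonneg f p)) _
  have hconj : (5 : ℝ).HolderConjugate (5 / 4) := by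
    rw [Real.holderConjugate_iff]
    norm_num
  refine ⟨L ^ (5 : ℝ) * C + ∫ p in torusBox d, (gradSq f p)⁻¹ ^ (5 / 4 : ℝ), by positivity,
    fun z hz hzρ => ?_⟩
  have hpow : IntegrableOn (fun p => L ^ (5 : ℝ) * ‖z - f p‖ ^ (-(1 / 2) : ℝ)) (torusBox d) :=
    (integrableOn_torusBox ((continuous_norm_sub_rpow hz _).comp hf.continuous)).const_mul _
  have hlogc : Continuous fun p => ‖Complex.log (z - f p)‖ :=
    ((continuous_const.sub (Complex.continuous_ofReal.comp hf.continuous)).clog fun p =>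
      Or.inr (by simpa using hz)).norm
  have hpoint (p : Fin d → ℝ) : ‖Complex.log (z - f p)‖ * (gradSq f p)⁻¹ ≤
      L ^ (5 : ℝ) * ‖z - f p‖ ^ (-(1 / 2) : ℝ) + (gradSq f p)⁻¹ ^ (5 / 4 : ℝ) := by
    refine (mul_le_rpow_add_rpow (norm_nonneg _) (inv_nonneg.2 (gradSq_nonneg f p)) hconj).trans ?_
    rw [show (-(1 / 2) : ℝ) = -(1 / 10) * 5 by norm_num, Real.rpow_mul (norm_nonneg _),
      ← Real.mul_rpow hL (by positivity)]
    gcongr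
    exact hlog _ (sub_ofReal_ne_zero hz _) (hzρ p)
  calc _ ≤ ∫ p in torusBox d,
          (L ^ (5 : ℝ) * ‖z - f p‖ ^ (-(1 / 2) : ℝ) + (gradSq f p)⁻¹ ^ (5 / 4 : ℝ)) :=
        integral_mono (hM.integrableOn_mul_inv_gradSq hd hf hlogc) (hpow.integrable.add hN) hpoint
    _ = L ^ (5 : ℝ) * (∫ p in torusBox d, ‖z - f p‖ ^ (-(1 / 2) : ℝ)) +
          ∫ p in torusBox d, (gradSq f p)⁻¹ ^ (5 / 4 : ℝ) := by
        rw [integral_add hpow hN, integral_const_mul]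
    _ ≤ _ := by
        gcongr
        exact hsub z hz hzρ

lemma hasDerivAt_neg_log_sub {z : ℂ} (hz : z.im ≠ 0) (t : ℝ) :
    HasDerivAt (fun t : ℝ => -Complex.log (z - t)) (1 / (z - t)) t := by
  have hsub : HasDerivAt (fun t : ℝ => z - t) (-1) t := by
    simpa using (Complex.ofRealCLM.hasDerivAt (x := t)).const_sub z
  refine (hsub.clog_real (Or.inr (by simpa using hz))).neg.congr_deriv ?_
  rw [neg_div, neg_neg]

lemma IsMorse.exists_norm_integral_div_le (hd : 3 ≤ d) (hM : IsMorse f) (hf : ContDiff ℝ 2 f)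
    (hper : IsTorusPeriodic f) :
    ∃ K, 0 ≤ K ∧ ∀ (u : (Fin d → ℝ) → ℂ) (M : ℝ), HasC1Bound u M → ∀ z : ℂ, z.im ≠ 0 →
      ‖∫ p in torusBox d, u p / (z - f p)‖ ≤ K * M := by
  obtain ⟨C, hC, hparts⟩ := hM.exists_norm_integral_mul_deriv_comp_le hd hf hper
  obtain ⟨F, hF⟩ := hper.exists_norm_le hf.continuous
  have hF₀ : 0 ≤ F := (norm_nonneg _).trans (hF 0)
  obtain ⟨L, hL, hlog⟩ := hM.exists_integral_norm_log_mul_inv_gradSq_le hd hf hper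
    (ρ := 2 * F + 1) (by positivity)
  refine ⟨C * L + volume.real (torusBox d), by positivity, fun u M hu z hz => ?_⟩
  have hM₀ := hu.nonneg
  rcases le_total (F + 1) ‖z‖ with hfar | hnear
  · have hquot (p : Fin d → ℝ) : ‖u p / (z - f p)‖ ≤ M := by
      have hone : 1 ≤ ‖z - f p‖ := by
        have htri := norm_sub_norm_le z (f p)
        rw [Complex.norm_real] at htri
        linarith [hF p]
      rw [norm_div]
      exact (div_le_self (norm_nonneg _) hone).trans (hu.norm_le p)
    calc _ ≤ M * volume.real (torusBox d) :=
          norm_setIntegral_le_of_norm_le_const isCompact_torusBox.measure_lt_top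
            fun p _ => hquot p
      _ ≤ (C * L + volume.real (torusBox d)) * M := by
          nlinarith [mul_nonneg (mul_nonneg hC hL) hM₀]
  · have hρ (p : Fin d → ℝ) : ‖z - f p‖ ≤ 2 * F + 1 := by
      have htri := norm_sub_le z (f p)
      rw [Complex.norm_real] at htri
      linarith [hF p]
    have hmain := hparts u M hu _ _ (hasDerivAt_neg_log_sub hz)
      (continuous_const.div (by fun_prop) (sub_ofReal_ne_zero hz))
    simp only [mul_one_div, norm_neg] at hmain
    calc _ ≤ C * M * L := hmain.trans (by gcongr; exact hlog z hz hρ)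
      _ ≤ (C * L + volume.real (torusBox d)) * M := by
          nlinarith [mul_nonneg (measureReal_nonneg (μ := volume) (s := torusBox d)) hM₀]

end UniformBounds

/-! ### Symbols of the basis vectors and of `g_x` -/

lemma lnorm_nonneg (x : Γd d) : 0 ≤ lnorm x := Real.sqrt_nonneg _

lemma abs_coord_le_lnorm (x : Γd d) (k : Fin d) : |(x k : ℝ)| ≤ lnorm x :=
  Real.abs_le_sqrt <| Finset.single_le_sum (f := fun i => (x i : ℝ) ^ 2)
    (fun _ _ => sq_nonneg _) (Finset.mem_univ k)

lemma norm_character (y : Γd d) (p : Fin d → ℝ) : ‖character y p‖ = 1 := by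
  rw [character, Complex.norm_exp]
  simp

lemma isTorusPeriodic_character (y : Γd d) : IsTorusPeriodic (character y) := by
  intro p m
  have hdot : dotZ (p + fun i => 2 * π * (m i : ℝ)) y =
      dotZ p y + 2 * π * ((∑ i, m i * y i : ℤ) : ℝ) := by
    simp only [dotZ, Pi.add_apply, add_mul, Finset.sum_add_distrib]
    push_cast
    simp only [Finset.mul_sum, mul_assoc]
  rw [character, character, hdot, Complex.exp_eq_exp_iff_exists_int]
  refine ⟨-∑ i, m i * y i, ?_⟩
  push_cast
  ring

/-- The continuous linear form `p ↦ ⟨p, y⟩`, a bundled `dotZ`, used to differentiate characters. -/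
def dotZCLM (y : Γd d) : (Fin d → ℝ) →L[ℝ] ℝ := ∑ i, (y i : ℝ) • ContinuousLinearMap.proj i

lemma dotZCLM_apply (y : Γd d) (p : Fin d → ℝ) : dotZCLM y p = dotZ p y := by
  simp [dotZCLM, dotZ, mul_comm]

lemma character_eq_exp_clm (y : Γd d) :
    character y = fun p => Complex.exp (-(Complex.I * Complex.ofRealCLM.comp (dotZCLM y) p)) := by
  funext p
  simp [character, dotZCLM_apply]

lemma partialDeriv_character (y : Γd d) (k : Fin d) (p : Fin d → ℝ) :
    partialDeriv (character y) k p = character y p * -(Complex.I * (y k : ℝ)) := by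
  have hderiv : HasFDerivAt (character y)
      (character y p • -(Complex.I • Complex.ofRealCLM.comp (dotZCLM y))) p := by
    rw [character_eq_exp_clm]
    exact ((Complex.ofRealCLM.comp (dotZCLM y)).hasFDerivAt.const_mul Complex.I).neg.cexp
  rw [partialDeriv, hderiv.fderiv]
  simp [dotZCLM_apply, dotZ, Pi.single_apply]

lemma hasC1Bound_character (y : Γd d) : HasC1Bound (character y) (1 + lnorm y) where
  contDiff := by
    rw [character_eq_exp_clm]
    exact (contDiff_const.mul (Complex.ofRealCLM.comp (dotZCLM y)).contDiff).neg.cexp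
  periodic := isTorusPeriodic_character y
  norm_le p := by
    rw [norm_character]
    linarith [lnorm_nonneg y]
  norm_partialDeriv_le k p := by
    rw [partialDeriv_character, norm_mul, norm_character, norm_neg, norm_mul, Complex.norm_I,
      Complex.norm_real, Real.norm_eq_abs]
    linarith [abs_coord_le_lnorm y k]

lemma ghat_eq_mul_character (e : (Fin d → ℝ) → ℝ) (x : Γd d) :
    ghat e x = fun p => (Complex.I / 2 * (gradSq e p : ℂ) +
      ∑ k, ((x k : ℝ) : ℂ) * (pd e k p : ℂ)) * character x p := by
  funext p
  rw [ghat, character]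
  push_cast
  simp only [mul_comm]

lemma exists_hasC1Bound_ghat {e : (Fin d → ℝ) → ℝ} (hf : ContDiff ℝ 2 e)
    (hper : IsTorusPeriodic e) :
    ∃ C, 0 < C ∧ ∀ x, HasC1Bound (ghat e x) (C * (1 + lnorm x) ^ 2) := by
  obtain ⟨B, hBpos, hB⟩ := HasC1Bound.exists_of_contDiff
    (contDiff_gradSq hf (m := 1) (by norm_num)) hper.gradSq
  obtain ⟨B', hB'pos, hB'⟩ := HasC1Bound.exists_forall_pd hf hper
  refine ⟨2 * B + 4 * (d * B'), by positivity, fun x => ?_⟩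
  have hx := lnorm_nonneg x
  have hlinear : ∑ k, 2 * ‖((x k : ℝ) : ℂ)‖ * B' ≤ 2 * (d * (lnorm x * B')) := by
    calc ∑ k, 2 * ‖((x k : ℝ) : ℂ)‖ * B' ≤ ∑ _k : Fin d, 2 * lnorm x * B' := by
          refine Finset.sum_le_sum fun k _ => ?_
          have := abs_coord_le_lnorm x k
          rw [Complex.norm_real, Real.norm_eq_abs]
          gcongr
      _ = 2 * (d * (lnorm x * B')) := by
          rw [Finset.sum_const, Finset.card_univ, Fintype.card_fin, nsmul_eq_mul]
          ring
  rw [ghat_eq_mul_character]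
  refine ((((HasC1Bound.const (Complex.I / 2)).mul hB.ofReal).add
    (HasC1Bound.sum (fun k => (HasC1Bound.const ((x k : ℝ) : ℂ)).mul (hB' k).ofReal)
      Finset.univ)).mul (hasC1Bound_character x)).mono ?_
  have hhalf : ‖Complex.I / 2‖ = 1 / 2 := by simp
  have hfactor : 2 * ‖Complex.I / 2‖ * B + ∑ k, 2 * ‖((x k : ℝ) : ℂ)‖ * B' ≤
      (B + 2 * (d * B')) * (1 + lnorm x) := by
    rw [hhalf]
    have hdB : (0 : ℝ) ≤ d * B' := by positivity
    nlinarith [mul_nonneg hBpos.le hx]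
  calc _ ≤ 2 * ((B + 2 * (d * B')) * (1 + lnorm x)) * (1 + lnorm x) := by gcongr
    _ = _ := by ring

/-! ### Perturbation of the free resolvent -/

/-- The Fourier transform of `v ∈ ℓ²(ℤ^d)` is a `C¹` periodic function bounded by `M` together with
its first partial derivatives. These are the vectors between which resolvents are estimated. -/
def HasC1Symbol (v : L2 d) (M : ℝ) : Prop := ∃ a, HasC1Bound a M ∧ HasSymbol v a

lemma HasC1Symbol.norm_le {v : L2 d} {M : ℝ} (hv : HasC1Symbol v M) : ‖v‖ ≤ M := by
  obtain ⟨a, ha, hva⟩ := hv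
  refine le_of_sq_le_sq ?_ ha.nonneg
  calc ‖v‖ ^ 2 = ‖⟪v, v⟫‖ := by
        rw [inner_self_eq_norm_sq_to_K]
        simp
    _ ≤ M ^ 2 := by
        rw [hva.inner_eq hva ha.contDiff.continuous ha.contDiff.continuous]
        refine norm_torusMean_le fun p _ => ?_
        rw [norm_mul, RCLike.norm_conj, ← sq]
        exact pow_le_pow_left₀ (norm_nonneg _) (ha.norm_le p) 2

lemma hasC1Symbol_delta (x : Γd d) : HasC1Symbol (delta x) (1 + lnorm x) :=
  ⟨character x, hasC1Bound_character x, hasSymbol_delta x⟩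

lemma IsMorse.exists_freeResolvent_bound (hd : 3 ≤ d) {f : (Fin d → ℝ) → ℝ} (hM : IsMorse f)
    (hf : ContDiff ℝ 2 f) (hper : IsTorusPeriodic f) :
    ∃ K, 0 < K ∧ ∀ G : L2 d →L[ℂ] L2 d, IsMultiplier f G → ∀ z : ℂ, z.im ≠ 0 →
      ∀ w M', HasC1Symbol w M' → ∃ r, z • r - G r = w ∧
        ∀ v M, HasC1Symbol v M → ‖⟪v, r⟫‖ ≤ K * M' * M := by
  obtain ⟨K, hK, hbound⟩ := hM.exists_norm_integral_div_le hd hf hper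
  refine ⟨2 * K + 1, by positivity, fun G hG z hz w M' ⟨b, hb, hwb⟩ => ?_⟩
  have hbcont := hb.contDiff.continuous
  have hfcont := hf.continuous
  obtain ⟨r, hr, hGr⟩ := hG.exists_hasSymbol_div hfcont hwb hbcont hz
  refine ⟨r, hGr, fun v M ⟨a, ha, hva⟩ => ?_⟩
  have hquot : Continuous fun p => b p / (z - (f p : ℂ)) :=
    hbcont.div (by fun_prop) fun p => sub_ofReal_ne_zero hz _
  rw [hva.inner_eq hr ha.contDiff.continuous hquot]
  simp only [← mul_div_assoc]
  calc _ ≤ K * (2 * M * M') :=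
        (norm_torusMean_le_norm_integral _).trans (hbound _ _ (ha.conj.mul hb) z hz)
    _ ≤ (2 * K + 1) * M' * M := by nlinarith [mul_nonneg ha.nonneg hb.nonneg]

lemma IsCommOp.norm_apply_le {V : Γd d → ℝ} {g : Γd d → L2 d} {C : L2 d →L[ℂ] L2 d}
    (hC : IsCommOp V g C) {A : L2 d →L[ℂ] ℂ} {r : L2 d} {ω₁ ω₂ : Γd d → ℝ} {S T : ℝ}
    (hAδ : ∀ x, ‖A (delta x)‖ ≤ S * ω₁ x) (hAg : ∀ x, ‖A (g x)‖ ≤ S * ω₂ x)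
    (hδr : ∀ x, ‖⟪delta x, r⟫‖ ≤ T * ω₁ x) (hgr : ∀ x, ‖⟪g x, r⟫‖ ≤ T * ω₂ x)
    (hV : Summable fun x => |V x| * (ω₁ x * ω₂ x)) :
    ‖A (C r)‖ ≤ 2 * S * T * ∑' x, |V x| * (ω₁ x * ω₂ x) := by
  have hterm (x : Γd d) :
      ‖A ((Complex.I * (V x : ℂ)) • (⟪g x, r⟫ • delta x - ⟪delta x, r⟫ • g x))‖ ≤
        2 * S * T * (|V x| * (ω₁ x * ω₂ x)) := by
    simp only [map_smul, map_sub, smul_eq_mul, norm_mul, Complex.norm_I, Complex.norm_real,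
      Real.norm_eq_abs, one_mul]
    calc |V x| * ‖⟪g x, r⟫ * A (delta x) - ⟪delta x, r⟫ * A (g x)‖
        ≤ |V x| * (T * ω₂ x * (S * ω₁ x) + T * ω₁ x * (S * ω₂ x)) := by
          gcongr
          exact norm_sub_le_of_le (norm_mul_le_of_le (hgr x) (hAδ x))
            (norm_mul_le_of_le (hδr x) (hAg x))
      _ = 2 * S * T * (|V x| * (ω₁ x * ω₂ x)) := by ring
  rw [← (A.hasSum (hC r)).tsum_eq]
  exact tsum_of_norm_bounded (hV.hasSum.mul_left _) hterm

lemma IsResolventAt.apply_eq_add {G C R : L2 d →L[ℂ] L2 d} {z : ℂ}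
    (hR : IsResolventAt (G + C) z R) {w r : L2 d} (hr : z • r - G r = w) :
    R w = r + R (C r) := by
  have hleft : R (z • r - (G r + C r)) = r := DFunLike.congr_fun hR.1 r
  rw [← hr, show z • r - G r = (z • r - (G r + C r)) + C r by abel, map_add, hleft]

lemma le_div_one_sub_mul_of_bound_improves {ι : Type*} {a ω : ι → ℝ} {κ q S₀ : ℝ} (hq₀ : 0 ≤ q)
    (hq₁ : q < 1) (hinit : ∀ j, a j ≤ S₀ * ω j)
    (himp : ∀ S, (∀ j, a j ≤ S * ω j) → ∀ j, a j ≤ (κ + q * S) * ω j) (j : ι) :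
    a j ≤ κ / (1 - q) * ω j := by
  have hne : 1 - q ≠ 0 := (sub_pos.2 hq₁).ne'
  have hiter (n : ℕ) : ∀ j, a j ≤ (κ / (1 - q) + q ^ n * (S₀ - κ / (1 - q))) * ω j := by
    induction n with
    | zero => simpa using hinit
    | succ n ih =>
      convert himp _ ih using 3
      field_simp
      ring
  have hlim : Filter.Tendsto (fun n : ℕ => (κ / (1 - q) + q ^ n * (S₀ - κ / (1 - q))) * ω j)
      Filter.atTop (nhds ((κ / (1 - q) + 0 * (S₀ - κ / (1 - q))) * ω j)) :=
    (((tendsto_pow_atTop_nhds_zero_of_lt_one hq₀ hq₁).mul_const _).const_add _).mul_const _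
  simpa using ge_of_tendsto' hlim fun n => hiter n j

section Resolvent

variable {V : Γd d → ℝ} {g : Γd d → L2 d} {G C R : L2 d →L[ℂ] L2 d} {z : ℂ} {ω₁ ω₂ : Γd d → ℝ}
  {K : ℝ}

lemma IsResolventAt.norm_inner_le_of_norm_inner_le (hR : IsResolventAt (G + C) z R)
    (hC : IsCommOp V g C) (hδ : ∀ x, HasC1Symbol (delta x) (ω₁ x))
    (hg : ∀ x, HasC1Symbol (g x) (ω₂ x)) (hV : Summable fun x => |V x| * (ω₁ x * ω₂ x))
    {v w r : L2 d} {M M' S : ℝ} (hv : HasC1Symbol v M) (hr : z • r - G r = w)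
    (hfree : ∀ u N, HasC1Symbol u N → ‖⟪u, r⟫‖ ≤ K * M' * N)
    (hS : ∀ u N, HasC1Symbol u N → ‖⟪v, R u⟫‖ ≤ S * (M * N)) :
    ‖⟪v, R w⟫‖ ≤ (K + 2 * K * (∑' x, |V x| * (ω₁ x * ω₂ x)) * S) * (M * M') := by
  have hperturbation := hC.norm_apply_le (A := (innerSL ℂ v).comp R) (r := r) (S := S * M)
    (T := K * M') (fun x => (hS _ _ (hδ x)).trans_eq (by ring))
    (fun x => (hS _ _ (hg x)).trans_eq (by ring)) (fun x => hfree _ _ (hδ x))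
    (fun x => hfree _ _ (hg x)) hV
  rw [ContinuousLinearMap.comp_apply, innerSL_apply_apply] at hperturbation
  rw [hR.apply_eq_add hr, inner_add_right]
  exact (norm_add_le_of_le (hfree _ _ hv) hperturbation).trans_eq (by ring)

lemma IsResolventAt.norm_inner_le (hR : IsResolventAt (G + C) z R) (hC : IsCommOp V g C)
    (hδ : ∀ x, HasC1Symbol (delta x) (ω₁ x)) (hg : ∀ x, HasC1Symbol (g x) (ω₂ x))
    (hV : Summable fun x => |V x| * (ω₁ x * ω₂ x)) (hK : 0 ≤ K)
    (hfree : ∀ w M', HasC1Symbol w M' → ∃ r, z • r - G r = w ∧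
      ∀ u N, HasC1Symbol u N → ‖⟪u, r⟫‖ ≤ K * M' * N)
    (hsmall : 2 * K * (∑' x, |V x| * (ω₁ x * ω₂ x)) < 1) {v w : L2 d} {M M' : ℝ}
    (hv : HasC1Symbol v M) (hw : HasC1Symbol w M') :
    ‖⟪v, R w⟫‖ ≤ K / (1 - 2 * K * ∑' x, |V x| * (ω₁ x * ω₂ x)) * (M * M') := by
  have hω (x : Γd d) : 0 ≤ ω₁ x * ω₂ x :=
    mul_nonneg ((norm_nonneg _).trans (hδ x).norm_le) ((norm_nonneg _).trans (hg x).norm_le)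
  have hσ : 0 ≤ ∑' x, |V x| * (ω₁ x * ω₂ x) :=
    tsum_nonneg fun x => mul_nonneg (abs_nonneg _) (hω x)
  refine le_div_one_sub_mul_of_bound_improves
    (ι := {j : L2 d × ℝ // HasC1Symbol j.1 j.2}) (a := fun j => ‖⟪v, R j.1.1⟫‖)
    (ω := fun j => M * j.1.2) (S₀ := ‖R‖) (by positivity) hsmall ?_ ?_ ⟨(w, M'), hw⟩
  · rintro ⟨⟨u, N⟩, hu⟩
    calc ‖⟪v, R u⟫‖ ≤ ‖v‖ * (‖R‖ * ‖u‖) := (norm_inner_le_norm _ _).trans <|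
          mul_le_mul_of_nonneg_left (R.le_opNorm u) (norm_nonneg v)
      _ ≤ M * (‖R‖ * N) := by
          gcongr
          exacts [(norm_nonneg v).trans hv.norm_le, hv.norm_le, hu.norm_le]
      _ = ‖R‖ * (M * N) := by ring
  · rintro S hS ⟨⟨u, N⟩, hu⟩
    obtain ⟨r, hr, hrfree⟩ := hfree u N hu
    exact hR.norm_inner_le_of_norm_inner_le hC hδ hg hV hv hr hrfree
      fun u' N' hu' => hS ⟨(u', N'), hu'⟩

end Resolvent

/-! ### The weighted norms of the potential -/

lemma Phi_one_le {m : ℕ} (hm : m ≠ 0) (n : ℕ) (V : Γd d → ℝ) : Phi 1 n V ≤ Phi m n V := by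
  obtain ⟨k, rfl⟩ := Nat.exists_eq_succ_of_ne_zero hm
  simp only [Phi, Nat.cast_one, div_one, Real.rpow_one, pow_one]
  set a : Γd d → ℝ≥0∞ :=
    fun x => ENNReal.ofReal (|V x| ^ ((1 : ℝ) / (k + 1 : ℕ)) * (1 + lnorm x) ^ n)
  have hpow (x : Γd d) : ENNReal.ofReal (|V x| * (1 + lnorm x) ^ n) ≤ a x ^ (k + 1) := by
    have hx : 1 ≤ (1 + lnorm x) ^ n := one_le_pow₀ (by linarith [lnorm_nonneg x])
    rw [← ENNReal.ofReal_pow (by positivity), mul_pow, one_div,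
      Real.rpow_inv_natCast_pow (abs_nonneg _) hm]
    gcongr
    exact le_self_pow₀ hx hm
  calc ∑' x, ENNReal.ofReal (|V x| * (1 + lnorm x) ^ n) ≤ ∑' x, (∑' y, a y) ^ k * a x := by
        refine ENNReal.tsum_le_tsum fun x => (hpow x).trans ?_
        rw [pow_succ]
        gcongr
        exact ENNReal.le_tsum x
    _ = (∑' x, a x) ^ (k + 1) := by rw [ENNReal.tsum_mul_left, pow_succ]

lemma summable_and_tsum_le_of_Phi_one_le {n : ℕ} {V : Γd d → ℝ} {c : ℝ} (hc : 0 ≤ c)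
    (h : Phi 1 n V ≤ ENNReal.ofReal c) : (Summable fun x => |V x| * (1 + lnorm x) ^ n) ∧
      ∑' x, |V x| * (1 + lnorm x) ^ n ≤ c := by
  have hnonneg (x : Γd d) : 0 ≤ |V x| * (1 + lnorm x) ^ n := by
    have := lnorm_nonneg x
    positivity
  simp only [Phi, Nat.cast_one, div_one, Real.rpow_one, pow_one] at h
  have hsum : Summable fun x => |V x| * (1 + lnorm x) ^ n := by
    simpa only [ENNReal.toReal_ofReal (hnonneg _)] using
      ENNReal.summable_toReal (h.trans_lt ENNReal.ofReal_lt_top).ne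
  refine ⟨hsum, ?_⟩
  rwa [← ENNReal.ofReal_tsum_of_nonneg hnonneg hsum, ENNReal.ofReal_le_ofReal_iff hc] at h

/-! ### Limiting absorption -/

theorem statement12_general (hd : 3 ≤ d) {e : (Fin d → ℝ) → ℝ} (he : Periodic2pi e)
    (heC3 : ContDiff ℝ 3 e) (heM : IsMorse (gradSq e)) :
    ∃ c c' : ℝ, 0 < c ∧ 0 < c' ∧
      ∀ (V : Γd d → ℝ) (g : Γd d → L2 d) (G Cv : L2 d →L[ℂ] L2 d),
        IsGVec e g → IsMultiplier (gradSq e) G → IsCommOp V g Cv →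
        Phi 1 3 V ≤ ENNReal.ofReal c →
        ∀ z : ℂ, z.im ≠ 0 → ∀ R : L2 d →L[ℂ] L2 d, IsResolventAt (G + Cv) z R →
          ∀ x y : Γd d, ‖⟪delta x, R (delta y)⟫‖ ≤ c' * (1 + lnorm x) * (1 + lnorm y) := by
  have hper : IsTorusPeriodic e := he
  obtain ⟨K, hK, hfree⟩ := heM.exists_freeResolvent_bound hd
    (contDiff_gradSq heC3 (by norm_num)) hper.gradSq
  obtain ⟨C, hC, hghat⟩ := exists_hasC1Bound_ghat (heC3.of_le (by norm_num)) hper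
  refine ⟨1 / (4 * K * C), 2 * K, by positivity, by positivity,
    fun V g G Cv hg hG hCv hPhi z hz R hR x y => ?_⟩
  obtain ⟨hsum, hle⟩ := summable_and_tsum_le_of_Phi_one_le (by positivity) hPhi
  have hweight (x : Γd d) : |V x| * ((1 + lnorm x) * (C * (1 + lnorm x) ^ 2)) =
      C * (|V x| * (1 + lnorm x) ^ 3) := by ring
  have hsmall : 2 * K * ∑' x, |V x| * ((1 + lnorm x) * (C * (1 + lnorm x) ^ 2)) ≤ 1 / 2 := by
    rw [le_div_iff₀ (by positivity)] at hle
    simp only [hweight, tsum_mul_left]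
    linarith
  have hLAP := hR.norm_inner_le hCv hasC1Symbol_delta (fun x => ⟨_, hghat x, hg x⟩)
    (by simpa only [hweight] using hsum.mul_left C) hK.le (hfree G hG z hz) (by linarith)
    (hasC1Symbol_delta x) (hasC1Symbol_delta y)
  have hx := lnorm_nonneg x
  have hy := lnorm_nonneg y
  have hconst : K / (1 - 2 * K * ∑' x, |V x| * ((1 + lnorm x) * (C * (1 + lnorm x) ^ 2))) ≤
      2 * K := by
    rw [div_le_iff₀ (by linarith)]
    nlinarith
  calc _ ≤ 2 * K * ((1 + lnorm x) * (1 + lnorm y)) := hLAP.trans (by gcongr)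
    _ = _ := by ring

end Development

/-- Limiting absorption principle for the commutator
`B = h(|∇𝔢|²) + C_V`. -/
theorem statement12 (d : ℕ) (hd : 3 ≤ d)
    (e : (Fin d → ℝ) → ℝ) (he : IsDispersion e) (heC3 : ContDiff ℝ 3 e) (heM : CondM e) :
    ∃ c : ℝ, 0 < c ∧
      ∀ (V : Γd d → ℝ) (g : Γd d → L2 d) (G Cv : L2 d →L[ℂ] L2 d),
        IsGVec e g → IsMultiplier (gradSq e) G → IsCommOp V g Cv →
        Phi 2 3 V < ENNReal.ofReal c →
        ∃ c' : ℝ, ∀ z : ℂ, z.im ≠ 0 → ∀ R : L2 d →L[ℂ] L2 d,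
          IsResolventAt (G + Cv) z R →
          ∀ x y : Γd d,
            ‖(⟪delta x, R (delta y)⟫ : ℂ)‖ ≤ c' * (1 + lnorm x) ^ 2 * (1 + lnorm y) ^ 2 := by
  obtain ⟨c, c', hc, hc', hLAP⟩ := statement12_general hd he.1 heC3 heM.2
  refine ⟨c, hc, fun V g G Cv hg hG hCv hPhi => ⟨c', fun z hz R hR x y => ?_⟩⟩
  have hweight (x : Γd d) : 1 + lnorm x ≤ (1 + lnorm x) ^ 2 :=
    le_self_pow₀ (le_add_of_nonneg_right (lnorm_nonneg x)) two_ne_zero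
  have hy : 0 ≤ 1 + lnorm y := add_nonneg zero_le_one (lnorm_nonneg y)
  have hbound := (Phi_one_le two_ne_zero 3 V).trans hPhi.le
  refine (hLAP V g G Cv hg hG hCv hbound z hz R hR x y).trans ?_
  gcongr <;> exact hweight _

end LatSch
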